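/- arXiv:2308.15082 — 6 statements merged into one kernel-verified Lean document; each statement's English description precedes it below -/
import Mathlib

section
/- Let H and U be complex Hilbert spaces, D a linear subspace of H, T : D → H and S : D → U linear maps, and β > 0. Assume there exist ω > 0 and C₀ > 0 such that for every λ ∈ ℂ with Re λ > ω and every φ ∈ D one has (Re λ − ω)·‖φ‖ ≤ C₀·‖λφ − Tφ‖. Then: (a) if there exists C > 0 such that ‖φ‖² ≤ C·(‖λφ − Tφ‖² + ‖Sφ‖²) for every λ ∈ ℂ with Re λ > −β and every φ ∈ D, then there exists C' > 0 such that (Re λ + β)²·‖φ‖² ≤ C'·(‖λφ − Tφ‖² + ‖Sφ‖²) for every λ ∈ ℂ with Re λ > −β and every φ ∈ D; (b) conversely, if there exists C' > 0 such that (Re λ + β)²·‖φ‖² ≤ C'·(‖λφ − Tφ‖² + ‖Sφ‖²) for every λ ∈ ℂ with Re λ > −β and every φ ∈ D, then for every β₁ ∈ (0,β) there exists C > 0 such that ‖φ‖² ≤ C·(‖λφ − Tφ‖² + ‖Sφ‖²) for every λ ∈ ℂ with Re λ > −β₁ and every φ ∈ D. -/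
/-- Equivalence of the two forms of the (HESI)_β inequality (Proposition in the Appendix):
under the resolvent-type estimate `(Re λ - ω)‖φ‖ ≤ C₀‖λφ - Tφ‖` for `Re λ > ω`,
(a) the unquantified inequality on `Re λ > -β` implies the quantified one on `Re λ > -β`,
and (b) conversely the quantified inequality on `Re λ > -β` implies the unquantified one
on `Re λ > -β₁` for every `0 < β₁ < β`. -/
theorem HESI_quantified_iff_unquantified
    {H U : Type*}
    [NormedAddCommGroup H] [InnerProductSpace ℂ H]
    [NormedAddCommGroup U] [InnerProductSpace ℂ U]
    (D : Submodule ℂ H) (T : D →ₗ[ℂ] H) (S : D →ₗ[ℂ] U) (β : ℝ) (hβ : 0 < β)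
    (hres : ∃ ω : ℝ, 0 < ω ∧ ∃ C₀ : ℝ, 0 < C₀ ∧ ∀ lam : ℂ, ω < lam.re → ∀ φ : D,
      (lam.re - ω) * ‖(φ : H)‖ ≤ C₀ * ‖lam • (φ : H) - T φ‖) :
    ((∃ C : ℝ, 0 < C ∧ ∀ lam : ℂ, -β < lam.re → ∀ φ : D,
        ‖(φ : H)‖ ^ 2 ≤ C * (‖lam • (φ : H) - T φ‖ ^ 2 + ‖S φ‖ ^ 2)) →
      ∃ C' : ℝ, 0 < C' ∧ ∀ lam : ℂ, -β < lam.re → ∀ φ : D,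
        (lam.re + β) ^ 2 * ‖(φ : H)‖ ^ 2
          ≤ C' * (‖lam • (φ : H) - T φ‖ ^ 2 + ‖S φ‖ ^ 2)) ∧
    ((∃ C' : ℝ, 0 < C' ∧ ∀ lam : ℂ, -β < lam.re → ∀ φ : D,
        (lam.re + β) ^ 2 * ‖(φ : H)‖ ^ 2
          ≤ C' * (‖lam • (φ : H) - T φ‖ ^ 2 + ‖S φ‖ ^ 2)) →
      ∀ β₁ : ℝ, 0 < β₁ → β₁ < β →
        ∃ C : ℝ, 0 < C ∧ ∀ lam : ℂ, -β₁ < lam.re → ∀ φ : D,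
          ‖(φ : H)‖ ^ 2 ≤ C * (‖lam • (φ : H) - T φ‖ ^ 2 + ‖S φ‖ ^ 2)) := by
  obtain ⟨ω, hω, C₀, hC₀, hr⟩ := hres
  constructor
  · rintro ⟨C, hC, h⟩
    refine ⟨4 * C₀ ^ 2 + (2 * ω + 2 * β) ^ 2 * C, by positivity, ?_⟩
    intro lam hl φ
    have h1 := h lam hl φ
    have hx := norm_nonneg (φ : H)
    have hN := norm_nonneg (lam • (φ : H) - T φ)
    have hS := sq_nonneg ‖S φ‖
    have h2 := hr lam
    by_cases hc : 2 * ω + β ≤ lam.re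
    · have h3 := h2 (by linarith) φ
      set N := ‖lam • (φ : H) - T φ‖
      set s := ‖S φ‖
      have h4 : (lam.re + β) * ‖(φ : H)‖ ≤ 2 * C₀ * N := by
        nlinarith [norm_nonneg (φ : H)]
      have h5 : ((lam.re + β) * ‖(φ : H)‖) ^ 2 ≤ (2 * C₀ * N) ^ 2 :=
        pow_le_pow_left₀ (mul_nonneg (by linarith) (norm_nonneg _)) h4 2
      have h6 : 0 ≤ (2 * ω + 2 * β) ^ 2 * C * (N ^ 2 + s ^ 2) := by positivity
      have h7 : 0 ≤ C₀ ^ 2 * s ^ 2 := by positivity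
      nlinarith
    · push Not at hc
      have h3 : (lam.re + β) ^ 2 ≤ (2 * ω + 2 * β) ^ 2 :=
        pow_le_pow_left₀ (by linarith) (by linarith) 2
      have h4 := mul_le_mul h3 h1 (by positivity) (by positivity)
      have h5 : 0 ≤ 4 * C₀ ^ 2 * (‖lam • (φ : H) - T φ‖ ^ 2 + ‖S φ‖ ^ 2) := by positivity
      linarith
  · rintro ⟨C, hC, h⟩ β₁ h0 h1
    have hd : 0 < β - β₁ := by linarith
    refine ⟨C / (β - β₁) ^ 2, by positivity, ?_⟩
    intro lam hl φ
    have h2 := h lam (by linarith) φ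
    have h3 : (β - β₁) ^ 2 ≤ (lam.re + β) ^ 2 :=
      pow_le_pow_left₀ hd.le (by linarith) 2
    have h4 := mul_le_mul_of_nonneg_right h3 (sq_nonneg ‖(φ : H)‖)
    rw [div_mul_eq_mul_div, le_div_iff₀ (by positivity)]
    linarith
end

section
/- Let N be a positive integer, E ⊆ ℝ^N a thick measurable set, a > 0, b ∈ ℝ, and β > 0. Then there exists C > 0 such that for every λ ∈ ℂ with Re λ > −β and every Schwartz function φ : ℝ^N → ℂ, ∫_{ℝ^N} |φ(x)|² dx ≤ C·( ∫_{ℝ^N} |λφ(x) − (a − i b)·Δφ(x)|² dx + ∫_E |φ(x)|² dx ), where Δφ(x) = Σ_{j=1}^N ∂²φ/∂x_j²(x) is the Laplacian of φ. -/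
open MeasureTheory Real

section HESIhelpers
open scoped FourierTransform InnerProductSpace ENNReal NNReal Topology

section HESI
variable {V : Type*} [NormedAddCommGroup V] [InnerProductSpace ℝ V] [FiniteDimensional ℝ V]
  [MeasurableSpace V] [BorelSpace V]

theorem hesi_ae_fderiv_real [Nontrivial V] (f : V → ℝ) (hf : Differentiable ℝ f) :
    ∀ᵐ x, f x = 0 → fderiv ℝ f x = 0 := by
  obtain ⟨v, hv⟩ := exists_ne (0 : V)
  have hm : MeasurableSet {x | f x = 0} := (isClosed_eq hf.continuous continuous_const).measurableSet
  have h1 : ApproximatesLinearOn (fun x => f x • v) (0 : V →L[ℝ] V) {x | f x = 0} 0 := by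
    intro x hx y hy
    simp only [Set.mem_ofPred_eq] at hx hy
    simp [hx, hy]
  have h2 := h1.norm_fderiv_sub_le (μ := volume) hm (fun x => (fderiv ℝ f x).smulRight v)
    (fun x _ => ((hf x).hasFDerivAt.smul_const v).hasFDerivWithinAt)
  rw [ae_restrict_iff' hm] at h2
  filter_upwards [h2] with x hx h0
  have h3 := hx h0
  simp only [sub_zero, nonpos_iff_eq_zero, nnnorm_eq_zero] at h3
  ext w
  have := congrArg (fun T : V →L[ℝ] V => T w) h3
  simpa [hv] using this

theorem hesi_ae_fderiv [Nontrivial V] (f : V → ℂ) (hf : Differentiable ℝ f) :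
    ∀ᵐ x, f x = 0 → fderiv ℝ f x = 0 := by
  have hr := hesi_ae_fderiv_real (fun x => (f x).re) (Complex.reCLM.differentiable.comp hf)
  have hi := hesi_ae_fderiv_real (fun x => (f x).im) (Complex.imCLM.differentiable.comp hf)
  filter_upwards [hr, hi] with x h1 h2 h0
  have e1 := h1 (by simp [h0])
  have e2 := h2 (by simp [h0])
  have d1 : HasFDerivAt (fun x => (f x).re) (Complex.reCLM.comp (fderiv ℝ f x)) x :=
    Complex.reCLM.hasFDerivAt.comp x (hf x).hasFDerivAt
  have d2 : HasFDerivAt (fun x => (f x).im) (Complex.imCLM.comp (fderiv ℝ f x)) x :=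
    Complex.imCLM.hasFDerivAt.comp x (hf x).hasFDerivAt
  rw [d1.fderiv] at e1
  rw [d2.fderiv] at e2
  ext w
  apply Complex.ext
  · simpa using congrArg (fun T : V →L[ℝ] ℝ => T w) e1
  · simpa using congrArg (fun T : V →L[ℝ] ℝ => T w) e2

theorem hesi_smc (z : Circle) (c g : ℂ) : z • (c * g) = c * (z • g) := by
  simp only [Circle.smul_def, smul_eq_mul]; ring

def HesiBL (R : ℝ) (h : V → ℂ) : Prop := Integrable h ∧ ∀ ξ, R < ‖ξ‖ → h ξ = 0

theorem HesiBL.mul {R : ℝ} {h : V → ℂ} (hh : HesiBL R h) {c : V → ℂ} (hc : Continuous c) :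
    HesiBL R (fun ξ => c ξ * h ξ) := by
  refine ⟨?_, fun ξ hξ => by simp [hh.2 ξ hξ]⟩
  have e : (fun ξ => c ξ * h ξ) = fun ξ => (Metric.closedBall (0:V) R).indicator c ξ * h ξ := by
    ext ξ
    by_cases hξ : ‖ξ‖ ≤ R
    · rw [Set.indicator_of_mem (by simpa using hξ)]
    · simp [hh.2 ξ (not_le.1 hξ)]
  obtain ⟨C, hC⟩ := (isCompact_closedBall (0:V) R).exists_bound_of_continuousOn hc.continuousOn
  rw [e]
  refine hh.1.bdd_mul (c := max C 0)
    (hc.aestronglyMeasurable.indicator Metric.isClosed_closedBall.measurableSet) ?_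
  filter_upwards with ξ
  by_cases hξ : ξ ∈ Metric.closedBall (0:V) R
  · rw [Set.indicator_of_mem hξ]; exact (hC ξ hξ).trans (le_max_left _ _)
  · rw [Set.indicator_of_notMem hξ]; simp

theorem HesiBL.ae_step [Nontrivial V] {R : ℝ} {h : V → ℂ} (hh : HesiBL R h) (m : V) :
    ∀ᵐ x, 𝓕 h x = 0 → 𝓕 (fun ξ => ((⟪ξ, m⟫_ℝ : ℝ) : ℂ) * h ξ) x = 0 := by
  have hi : Integrable (fun v => ‖v‖ * ‖h v‖) := by
    have := (hh.mul (c := fun ξ => ((‖ξ‖ : ℝ) : ℂ)) (by fun_prop)).1.norm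
    simpa using this
  have hd : Differentiable ℝ (𝓕 h) := fun x =>
    (Real.hasFDerivAt_fourier hh.1 hi x).differentiableAt
  filter_upwards [hesi_ae_fderiv _ hd] with x hx h0
  have h1 := hx h0
  rw [(Real.hasFDerivAt_fourier hh.1 hi x).fderiv] at h1
  have h2 := congrArg (fun T : V →L[ℝ] ℂ => T m) h1
  simp only [zero_apply] at h2
  rw [Real.fourier_eq] at h2
  have hint : Integrable (fun v => 𝐞 (-⟪v, x⟫_ℝ) • VectorFourier.fourierSMulRight (innerSL ℝ) h v) := by
    refine (Real.fourierIntegral_convergent_iff x).2 ?_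
    refine Integrable.mono' (hi.const_mul (2 * π)) ?_ ?_
    · exact hh.1.1.fourierSMulRight
    · filter_upwards with v
      rw [VectorFourier.norm_fourierSMulRight, innerSL_apply_norm, mul_assoc]
  rw [ContinuousLinearMap.integral_apply hint] at h2
  rw [Real.fourier_eq]
  have h4 : ∀ v, (𝐞 (-⟪v, x⟫_ℝ) • VectorFourier.fourierSMulRight (innerSL ℝ) h v) m
     = (-(2 * π * Complex.I)) * (𝐞 (-⟪v, x⟫_ℝ) • (((⟪v, m⟫_ℝ : ℝ) : ℂ) * h v)) := by
    intro v
    change 𝐞 (-⟪v, x⟫_ℝ) • (VectorFourier.fourierSMulRight (innerSL ℝ) h v m) = _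
    rw [VectorFourier.fourierSMulRight_apply]
    rw [innerSL_apply_apply]
    simp only [Circle.smul_def, smul_eq_mul, Complex.real_smul]
    ring
  simp_rw [h4] at h2
  rw [integral_const_mul] at h2
  simpa [pi_ne_zero] using h2

theorem HesiBL.zero_of_pos [Nontrivial V] {R : ℝ} {h : V → ℂ} (hh : HesiBL R h)
    (hZ : volume {x | 𝓕 h x = 0} ≠ 0) (x : V) : 𝓕 h x = 0 := by
  let b := stdOrthonormalBasis ℝ V
  let H : List (Fin (Module.finrank ℝ V)) → V → ℂ := fun l =>
    l.foldr (fun j g ξ => ((⟪ξ, b j⟫_ℝ : ℝ) : ℂ) * g ξ) h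
  have H1 : ∀ l, HesiBL R (H l) := by
    intro l
    induction l with
    | nil => exact hh
    | cons j l ih => exact ih.mul (by fun_prop)
  have H2 : ∀ l, ∀ᵐ x, 𝓕 h x = 0 → 𝓕 (H l) x = 0 := by
    intro l
    induction l with
    | nil => exact Filter.Eventually.of_forall fun x hx => hx
    | cons j l ih =>
      filter_upwards [ih, (H1 l).ae_step (b j)] with x h1 h2 h0
      exact h2 (h1 h0)
  obtain ⟨x0, hx0⟩ : ∃ x0, ∀ l, 𝓕 (H l) x0 = 0 := by
    by_contra! hcon
    apply hZ
    refine measure_mono_null ?_ (ae_all_iff.2 H2)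
    intro x hx
    obtain ⟨l, hl⟩ := hcon x
    simp only [Set.mem_compl_iff, Set.mem_ofPred_eq, not_forall]
    exact ⟨l, hx, hl⟩
  set y := x - x0 with hy
  have fint : ∀ {g : V → ℂ}, HesiBL R g → Integrable (fun ξ => 𝐞 (-⟪ξ, x0⟫_ℝ) • g ξ) := by
    intro g hg
    exact (Real.fourierIntegral_convergent_iff _).2 hg.1
  have H3 : ∀ k : ℕ, ∀ l, 𝓕 (fun ξ => ((⟪ξ, y⟫_ℝ : ℝ) : ℂ) ^ k * H l ξ) x0 = 0 := by
    intro k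
    induction k with
    | zero => intro l; simpa using hx0 l
    | succ k ih =>
      intro l
      have e : (fun ξ => ((⟪ξ, y⟫_ℝ : ℝ) : ℂ) ^ (k+1) * H l ξ) = fun ξ =>
          ∑ j, ((⟪b j, y⟫_ℝ : ℝ) : ℂ) * (((⟪ξ, y⟫_ℝ : ℝ) : ℂ) ^ k * H (j :: l) ξ) := by
        ext ξ
        have : ((⟪ξ, y⟫_ℝ : ℝ) : ℂ) = ∑ j, ((⟪ξ, b j⟫_ℝ : ℝ) : ℂ) * ((⟪b j, y⟫_ℝ : ℝ) : ℂ) := by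
          rw [← b.sum_inner_mul_inner ξ y]; push_cast; rfl
        rw [pow_succ, mul_assoc]
        nth_rw 2 [this]
        rw [Finset.sum_mul, Finset.mul_sum]
        refine Finset.sum_congr rfl fun j _ => ?_
        change _ = ((⟪b j, y⟫_ℝ : ℝ) : ℂ) * (((⟪ξ, y⟫_ℝ : ℝ) : ℂ) ^ k *
          (((⟪ξ, b j⟫_ℝ : ℝ) : ℂ) * H l ξ))
        ring
      rw [e, Real.fourier_eq]
      simp_rw [Finset.smul_sum]
      rw [integral_finsetSum]
      · refine Finset.sum_eq_zero fun j _ => ?_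
        have := ih (j :: l)
        rw [Real.fourier_eq] at this
        simp_rw [hesi_smc] at this
        simp_rw [hesi_smc]
        rw [integral_const_mul, this, mul_zero]
      · intro j _
        exact fint (((H1 (j :: l)).mul (c := fun ξ => ((⟪ξ, y⟫_ℝ : ℝ) : ℂ) ^ k)
          (by fun_prop)).mul (c := fun _ => ((⟪b j, y⟫_ℝ : ℝ) : ℂ)) (by fun_prop))
  let F : ℕ → V → ℂ := fun k ξ => 𝐞 (-⟪ξ, x0⟫_ℝ) •
    ((-(2 * π * Complex.I)) ^ k / (k.factorial : ℂ) * (((⟪ξ, y⟫_ℝ : ℝ) : ℂ) ^ k * h ξ))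
  have F0 : ∀ k, ∫ ξ, F k ξ = 0 := by
    intro k
    have := H3 k []
    rw [Real.fourier_eq] at this
    simp only [hesi_smc] at this
    simp only [F, hesi_smc]
    rw [integral_const_mul]
    exact mul_eq_zero_of_right _ this
  have Fi : ∀ k, Integrable (F k) := fun k =>
    fint ((hh.mul (c := fun ξ => ((⟪ξ, y⟫_ℝ : ℝ) : ℂ) ^ k) (by fun_prop)).mul
      (c := fun _ => (-(2 * π * Complex.I)) ^ k / (k.factorial : ℂ)) (by fun_prop))
  have Fb : ∀ k ξ, ‖F k ξ‖ ≤ (2 * π * (|R| * ‖y‖)) ^ k / k.factorial * ‖h ξ‖ := by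
    intro k ξ
    simp only [F, Circle.norm_smul, norm_mul, norm_div, norm_pow, norm_neg, Complex.norm_I,
      Complex.norm_real, Complex.norm_natCast, mul_one, Complex.norm_ofNat, Real.norm_eq_abs,
      abs_of_pos pi_pos]
    by_cases hξ : R < ‖ξ‖
    · simp [hh.2 ξ hξ]
    · have : |⟪ξ, y⟫_ℝ| ≤ |R| * ‖y‖ := (abs_real_inner_le_norm _ _).trans
        (by gcongr; exact (not_lt.1 hξ).trans (le_abs_self _))
      rw [mul_pow (2 * π), mul_div_right_comm, mul_assoc]
      gcongr
  have Fs : Summable fun k => ∫ ξ, ‖F k ξ‖ := by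
    refine Summable.of_nonneg_of_le (fun k => integral_nonneg fun _ => norm_nonneg _) (fun k => ?_)
      ((Real.summable_pow_div_factorial (2 * π * (|R| * ‖y‖))).mul_right (∫ ξ, ‖h ξ‖))
    rw [← integral_const_mul]
    exact integral_mono (Fi k).norm (hh.1.norm.const_mul _) (Fb k)
  have hs := hasSum_integral_of_summable_integral_norm Fi Fs
  simp_rw [F0] at hs
  have e := hs.unique hasSum_zero
  rw [Real.fourier_eq, ← e]
  refine integral_congr_ae (Filter.Eventually.of_forall fun ξ => ?_)
  have hx : x = x0 + y := by simp [hy]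
  have hexp := NormedSpace.expSeries_div_hasSum_exp (-(2 * π * Complex.I) * ((⟪ξ, y⟫_ℝ : ℝ) : ℂ))
  have := (hexp.mul_right (h ξ)).const_smul (𝐞 (-⟪ξ, x0⟫_ℝ))
  symm
  refine HasSum.tsum_eq ?_
  convert! this using 1
  · ext k
    simp only [F]
    congr 1
    rw [mul_pow]
    ring
  · beta_reduce
    rw [hx, inner_add_right, neg_add, AddChar.map_add_eq_mul, mul_smul]
    congr 1
    rw [Circle.smul_def, Real.fourierChar_apply, smul_eq_mul, Complex.exp_eq_exp_ℂ]
    congr 2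
    push_cast
    ring
end HESI

section HESI
variable {V : Type*} [NormedAddCommGroup V] [InnerProductSpace ℝ V] [FiniteDimensional ℝ V]
  [MeasurableSpace V] [BorelSpace V]

theorem hesi_eLpNorm (g : V → ℂ) : eLpNorm g 2 volume ^ 2 = ∫⁻ x, ‖g x‖ₑ ^ 2 := by
  rw [eLpNorm_eq_lintegral_rpow_enorm_toReal (by simp) (by simp)]
  rw [← ENNReal.rpow_natCast, ← ENNReal.rpow_mul]
  simp

/-- weak sequential compactness for band-limited functions -/
theorem hesi_weak (R : ℝ) : ∃ K : ℝ≥0, ∀ g : ℕ → SchwartzMap V ℂ,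
    (∀ n ξ, R < ‖ξ‖ → 𝓕 (g n) ξ = 0) → (∀ n, ∫⁻ x, ‖g n x‖ₑ ^ 2 = 1) →
    (∀ n x, ‖g n x‖ₑ ≤ K) ∧
    ∃ φ : ℕ → ℕ, StrictMono φ ∧ ∃ h : V → ℂ, HesiBL R h ∧
      ∀ x, Filter.Tendsto (fun n => g (φ n) x) Filter.atTop (𝓝 (𝓕 h x)) := by
  let B := Metric.closedBall (0:V) R
  have hB : MeasurableSet B := Metric.isClosed_closedBall.measurableSet
  have hBf : volume B < ∞ := measure_closedBall_lt_top
  let e : V → V → ℂ := fun x => B.indicator fun ξ => ((𝐞 (-⟪ξ, x⟫_ℝ) : Circle) : ℂ)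
  have he1 : ∀ x, eLpNorm (e x) 2 volume = eLpNorm (B.indicator fun _ => (1:ℂ)) 2 volume := by
    intro x
    refine eLpNorm_congr_norm_ae (Filter.Eventually.of_forall fun ξ => ?_)
    by_cases hξ : ξ ∈ B <;> simp [e, hξ, Circle.norm_coe]
  have he0 : MemLp (B.indicator fun _ => (1:ℂ)) 2 volume :=
    memLp_indicator_const 2 hB _ (Or.inr hBf.ne)
  have he2 : ∀ x, MemLp (e x) 2 volume := by
    intro x
    refine ⟨?_, (he1 x).trans_lt he0.2⟩
    refine AEStronglyMeasurable.indicator (Continuous.aestronglyMeasurable ?_) hB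
    have : Continuous fun ξ : V => 𝐞 (-⟪ξ, x⟫_ℝ) := Real.continuous_fourierChar.comp (by fun_prop)
    exact continuous_subtype_val.comp this
  let ev : V → Lp ℂ 2 (volume : Measure V) := fun x => (he2 x).toLp (e x)
  have hin : ∀ x (u : Lp ℂ 2 (volume : Measure V)),
      ⟪ev x, u⟫_ℂ = 𝓕⁻ (B.indicator u) x := by
    intro x u
    rw [L2.inner_def, Real.fourierInv_eq]
    refine integral_congr_ae ?_
    filter_upwards [(he2 x).coeFn_toLp] with ξ hξ
    simp only [ev, hξ]
    by_cases h : ξ ∈ B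
    · simp only [e, Set.indicator_of_mem h, RCLike.inner_apply, Circle.smul_def, smul_eq_mul]
      rw [AddChar.map_neg_eq_inv, Circle.coe_inv_eq_conj, Complex.conj_conj, mul_comm]
    · simp [e, h]
  let K : ℝ≥0 := (eLpNorm (B.indicator fun _ => (1:ℂ)) 2 (volume : Measure V)).toNNReal
  refine ⟨K, fun g hg hg1 => ?_⟩
  let u : ℕ → Lp ℂ 2 (volume : Measure V) := fun n => (𝓕 (g n)).toLp 2
  have hu : ∀ n, ‖u n‖ = 1 := by
    intro n
    simp only [u]
    rw [SchwartzMap.norm_fourier_toL2_eq, SchwartzMap.norm_toLp]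
    have h1 := hesi_eLpNorm (g n)
    rw [hg1] at h1
    have : (eLpNorm (g n) 2 volume).toReal ^ 2 = 1 := by
      rw [← ENNReal.toReal_pow, h1]; simp
    nlinarith [ENNReal.toReal_nonneg (a := eLpNorm (g n) 2 volume)]
  have hgu : ∀ n x, ⟪ev x, u n⟫_ℂ = g n x := by
    intro n x
    rw [hin]
    have : B.indicator (u n) =ᵐ[volume] ⇑(𝓕 (g n) : SchwartzMap V ℂ) := by
      filter_upwards [(𝓕 (g n)).coeFn_toLp 2 volume] with ξ hξ
      by_cases h : ξ ∈ B
      · rw [Set.indicator_of_mem h]; exact hξ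
      · rw [Set.indicator_of_notMem h, hg n ξ (by simpa [B] using h)]
    have h2 : 𝓕⁻ (B.indicator (u n)) x = 𝓕⁻ (⇑(𝓕 (g n) : SchwartzMap V ℂ)) x := by
      rw [Real.fourierInv_eq, Real.fourierInv_eq]
      refine integral_congr_ae ?_
      filter_upwards [this] with ξ hξ
      rw [hξ]
    rw [h2, ← SchwartzMap.fourierInv_coe, FourierTransform.fourierInv_fourier_eq]
  constructor
  · intro n x
    have h1 : ‖g n x‖ ≤ ‖ev x‖ := by
      rw [← hgu]
      have := norm_inner_le_norm (𝕜 := ℂ) (ev x) (u n)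
      rwa [hu, mul_one] at this
    have h2 : ‖ev x‖ = K := by
      simp only [ev, Lp.norm_toLp, he1, K]; rfl
    rw [h2] at h1
    exact_mod_cast h1
  have : Fact ((2:ℝ≥0∞) ≠ ∞) := ⟨by simp⟩
  let T : ℕ → WeakDual ℂ (Lp ℂ 2 (volume : Measure V)) := fun n =>
    WeakDual.toStrongDual.symm (InnerProductSpace.toDual ℂ _ (u n))
  obtain ⟨S, -, φ, hφ, hS⟩ := WeakDual.isSeqCompact_closedBall ℂ (Lp ℂ 2 (volume : Measure V)) 0 1
    (x := T) (fun n => by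
      simp only [T, Set.mem_preimage, LinearEquiv.apply_symm_apply, mem_closedBall_zero_iff,
        LinearIsometryEquiv.norm_map, hu, le_refl])
  let h := (InnerProductSpace.toDual ℂ (Lp ℂ 2 (volume : Measure V))).symm
    (WeakDual.toStrongDual S)
  refine ⟨φ, hφ, fun ξ => B.indicator h (-ξ), ⟨?_, ?_⟩, ?_⟩
  · have : Integrable (B.indicator h) := by
      rw [integrable_indicator_iff hB]
      have : IsFiniteMeasure (volume.restrict B) := ⟨by simpa using hBf⟩
      exact ((Lp.memLp h).restrict B).integrable (by norm_num)
    exact this.comp_neg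
  · intro ξ hξ
    exact Set.indicator_of_notMem (by simpa [B] using hξ) _
  · intro x
    rw [← Real.fourierInv_eq_fourier_comp_neg, ← hin]
    have h1 : Filter.Tendsto (fun n => T (φ n) (ev x)) Filter.atTop (𝓝 (S (ev x))) :=
      ((WeakDual.eval_continuous (ev x)).tendsto S).comp hS
    have h2 : S (ev x) = ⟪h, ev x⟫_ℂ := by
      simp only [h, InnerProductSpace.toDual_symm_apply]; rfl
    have h3 : ∀ n, T n (ev x) = ⟪u n, ev x⟫_ℂ := fun n => rfl
    simp_rw [h3] at h1
    rw [h2] at h1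
    have h4 := (Complex.continuous_conj.tendsto _).comp h1
    simp only [Function.comp_def, inner_conj_symm] at h4
    simpa only [hgu] using h4



theorem hesi_limsup {F : ℕ → Set V} {ρ : ℝ} {κ : ℝ≥0∞} (hκ : κ ≠ 0) (hm : ∀ n, MeasurableSet (F n))
    (hF : ∀ n, F n ⊆ Metric.closedBall 0 ρ) (hκF : ∀ n, κ ≤ volume (F n)) :
    volume {x | ∀ m, ∃ n, m ≤ n ∧ x ∈ F n} ≠ 0 := by
  let S : ℕ → Set V := fun m => ⋃ n, ⋃ (_ : m ≤ n), F n
  have hSm : ∀ m, MeasurableSet (S m) := fun m =>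
    MeasurableSet.iUnion fun n => MeasurableSet.iUnion fun _ => hm n
  have hSB : ∀ m, S m ⊆ Metric.closedBall 0 ρ := fun m =>
    Set.iUnion_subset fun n => Set.iUnion_subset fun _ => hF n
  have ha : Antitone S := by
    intro a b hab x hx
    simp only [S, Set.mem_iUnion] at hx ⊢
    obtain ⟨n, hn, hx⟩ := hx
    exact ⟨n, hab.trans hn, hx⟩
  have ht := tendsto_measure_iInter_atTop (μ := (volume : Measure V))
    (fun m => (hSm m).nullMeasurableSet) ha
    ⟨0, ((measure_mono (hSB 0)).trans_lt measure_closedBall_lt_top).ne⟩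
  have hle : κ ≤ volume (⋂ m, S m) := by
    refine ge_of_tendsto' ht fun m => (hκF m).trans (measure_mono ?_)
    intro x hx
    simp only [S, Set.mem_iUnion]
    exact ⟨m, le_rfl, hx⟩
  have he : {x | ∀ m, ∃ n, m ≤ n ∧ x ∈ F n} = ⋂ m, S m := by
    ext x
    simp [S]
  rw [he]
  intro h0
  rw [h0] at hle
  exact hκ (nonpos_iff_eq_zero.1 hle)

theorem hesi_compact_one [Nontrivial V] (R ρ : ℝ) {κ : ℝ≥0∞} (hκ : κ ≠ 0) {δ : ℝ≥0} (hδ : 0 < δ) :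
    ∃ C : ℝ≥0, ∀ g : SchwartzMap V ℂ, (∀ ξ, R < ‖ξ‖ → 𝓕 g ξ = 0) → (∫⁻ x, ‖g x‖ₑ ^ 2 = 1) →
      ∀ F : Set V, MeasurableSet F → F ⊆ Metric.closedBall 0 ρ → κ ≤ volume F →
      1 ≤ C * (∫⁻ x in F, ‖g x‖ₑ ^ 2) + δ * ∫⁻ x, ‖x‖ₑ ^ 2 * ‖g x‖ₑ ^ 2 := by
  obtain ⟨K, hK⟩ := hesi_weak (V := V) R
  by_contra! hcon
  choose g hg hg1 F hF hFρ hFκ hlt using fun n : ℕ => hcon (2 ^ n)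
  obtain ⟨hb, φ, hφ, h, hh, hlim⟩ := hK g hg hg1
  have hmeas : ∀ n, Measurable fun x => ‖g n x‖ₑ ^ 2 := fun n =>
    ((g n).continuous.measurable.enorm).pow_const 2
  have hFi : ∀ n, ∫⁻ x in F n, ‖g n x‖ₑ ^ 2 ≤ (2⁻¹) ^ n := by
    intro n
    have h1 : (2 : ℝ≥0∞) ^ n * ∫⁻ x in F n, ‖g n x‖ₑ ^ 2 ≤ 1 := by
      have := le_self_add.trans (hlt n).le
      simpa using this
    rw [← ENNReal.inv_pow]
    rw [mul_comm] at h1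
    simpa using (ENNReal.le_div_iff_mul_le (Or.inl (by simp)) (Or.inl (by simp))).2 h1
  -- vanishing of the limit
  have hsum : ∫⁻ x, ∑' n, (F (φ n)).indicator (fun x => ‖g (φ n) x‖ₑ ^ 2) x ≠ ∞ := by
    rw [lintegral_tsum fun n => ((hmeas _).indicator (hF _)).aemeasurable]
    simp_rw [lintegral_indicator (hF _)]
    refine ne_top_of_le_ne_top ?_ (ENNReal.tsum_le_tsum fun n =>
      (hFi (φ n)).trans (pow_le_pow_of_le_one (by simp) (by simp) (hφ.id_le n)))
    simp only [id]
    rw [ENNReal.tsum_geometric]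
    simp
  have hae := ae_lt_top (Measurable.tsum fun n => (hmeas (φ n)).indicator (hF (φ n))) hsum
  have hS := hesi_limsup hκ (fun n => hF (φ n)) (fun n => hFρ (φ n)) (fun n => hFκ (φ n))
  have hzero : ∀ x, 𝓕 h x = 0 := by
    refine hh.zero_of_pos fun h0 => hS ?_
    have h1 : ∀ᵐ x, 𝓕 h x ≠ 0 := by
      rw [ae_iff]; simpa using h0
    have h2 : ∀ᵐ x, ¬ (∀ m, ∃ n, m ≤ n ∧ x ∈ F (φ n)) := by
      filter_upwards [h1, hae] with x hx hx2 hfr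
      apply hx
      have t1 := ENNReal.tendsto_atTop_zero_of_tsum_ne_top hx2.ne
      have t2 : Filter.Tendsto (fun n => ‖g (φ n) x‖ₑ ^ 2) Filter.atTop (𝓝 (‖𝓕 h x‖ₑ ^ 2)) :=
        ((ENNReal.continuous_pow 2).tendsto _).comp ((continuous_enorm.tendsto _).comp (hlim x))
      have hfr' : ∃ᶠ n in Filter.atTop, x ∈ F (φ n) := by
        rw [Filter.frequently_atTop]
        exact hfr
      by_contra hne
      have hpos : 0 < ‖𝓕 h x‖ₑ ^ 2 := by
        simpa [pos_iff_ne_zero] using hne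
      obtain ⟨c, hc0, hc⟩ := exists_between hpos
      have e1 := t1.eventually (gt_mem_nhds hc0)
      have e2 := t2.eventually (lt_mem_nhds hc)
      obtain ⟨n, hn, hn1, hn2⟩ := (hfr'.and_eventually (e1.and e2)).exists
      rw [Set.indicator_of_mem hn] at hn1
      exact lt_asymm hn1 hn2
    rw [ae_iff] at h2
    simpa using h2
  -- lower bound of mass
  obtain ⟨r, hr0, hr⟩ : ∃ r : ℝ≥0, 0 < r ∧ 2 ≤ δ * r ^ 2 := by
    refine ⟨2 / δ + 1, by positivity, ?_⟩
    have h1 : δ * (2 / δ) = 2 := by field_simp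
    calc (2 : ℝ≥0) = δ * (2 / δ) := h1.symm
      _ ≤ δ * (2 / δ + 1) ^ 2 := by
        gcongr
        have : (2 / δ + 1) ^ 2 = 2 / δ + (2 / δ + 1 + (2 / δ) ^ 2) := by ring
        rw [this]; exact le_self_add
  let B := Metric.closedBall (0:V) r
  have hB : MeasurableSet B := Metric.isClosed_closedBall.measurableSet
  have hlow : ∀ n, 2⁻¹ ≤ ∫⁻ x in B, ‖g n x‖ₑ ^ 2 := by
    intro n
    have h1 : (∫⁻ x in B, ‖g n x‖ₑ ^ 2) + ∫⁻ x in Bᶜ, ‖g n x‖ₑ ^ 2 = 1 := by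
      rw [lintegral_add_compl _ hB, hg1]
    have h2 : 2 * ∫⁻ x in Bᶜ, ‖g n x‖ₑ ^ 2 ≤ 1 := by
      calc 2 * ∫⁻ x in Bᶜ, ‖g n x‖ₑ ^ 2 = ∫⁻ x in Bᶜ, 2 * ‖g n x‖ₑ ^ 2 := by
            rw [lintegral_const_mul _ (hmeas n)]
        _ ≤ ∫⁻ x in Bᶜ, δ * (‖x‖ₑ ^ 2 * ‖g n x‖ₑ ^ 2) := by
            refine setLIntegral_mono' hB.compl fun x hx => ?_
            rw [← mul_assoc]
            gcongr
            have hx' : r ≤ ‖x‖₊ := by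
              have : ¬ ‖x‖ ≤ r := by simpa [B] using hx
              exact_mod_cast (not_le.1 this).le
            have : (2 : ℝ≥0) ≤ δ * ‖x‖₊ ^ 2 := hr.trans (by gcongr)
            rw [enorm_eq_nnnorm]
            exact_mod_cast this
        _ ≤ ∫⁻ x, δ * (‖x‖ₑ ^ 2 * ‖g n x‖ₑ ^ 2) := setLIntegral_le_lintegral _ _
        _ = δ * ∫⁻ x, ‖x‖ₑ ^ 2 * ‖g n x‖ₑ ^ 2 := by
            rw [lintegral_const_mul]
            exact (measurable_enorm.pow_const 2).mul (hmeas n)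
        _ ≤ 1 := le_add_self.trans (hlt n).le
    have h3 : ∫⁻ x in Bᶜ, ‖g n x‖ₑ ^ 2 ≤ 2⁻¹ := by
      rw [mul_comm] at h2
      simpa using (ENNReal.le_div_iff_mul_le (Or.inl (by simp)) (Or.inl (by simp))).2 h2
    by_contra! h4
    have h5 := ENNReal.add_lt_add_of_lt_of_le (by simpa using ne_top_of_le_ne_top (by simp) h3) h4 h3
    rw [h1, ENNReal.inv_two_add_inv_two] at h5
    exact lt_irrefl _ h5
  have hdc := tendsto_lintegral_of_dominated_convergence (μ := volume.restrict B)
    (F := fun n x => ‖g (φ n) x‖ₑ ^ 2) (f := fun x => ‖𝓕 h x‖ₑ ^ 2) (fun _ => (K : ℝ≥0∞) ^ 2)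
    (fun n => hmeas (φ n)) (fun n => Filter.Eventually.of_forall fun x => by
      have := hb (φ n) x
      dsimp only
      gcongr)
    (by
      rw [lintegral_const]
      refine ENNReal.mul_ne_top (by simp) ?_
      rw [Measure.restrict_apply_univ]
      exact measure_closedBall_lt_top.ne)
    (Filter.Eventually.of_forall fun x => 
      ((ENNReal.continuous_pow 2).tendsto _).comp ((continuous_enorm.tendsto _).comp (hlim x)))
  have hfin := ge_of_tendsto' hdc fun n => hlow (φ n)
  simp [hzero] at hfin

theorem hesi_compact [Nontrivial V] (R ρ : ℝ) {κ : ℝ≥0∞} (hκ : κ ≠ 0) {δ : ℝ≥0} (hδ : 0 < δ) :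
    ∃ C : ℝ≥0, ∀ g : SchwartzMap V ℂ, (∀ ξ, R < ‖ξ‖ → 𝓕 g ξ = 0) →
      ∀ F : Set V, MeasurableSet F → F ⊆ Metric.closedBall 0 ρ → κ ≤ volume F →
      ∫⁻ x, ‖g x‖ₑ ^ 2 ≤
        C * (∫⁻ x in F, ‖g x‖ₑ ^ 2) + δ * ∫⁻ x, ‖x‖ₑ ^ 2 * ‖g x‖ₑ ^ 2 := by
  obtain ⟨C, hC⟩ := hesi_compact_one (V := V) R ρ hκ hδ
  refine ⟨C, fun g hg F hF hFρ hFκ => ?_⟩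
  set s := eLpNorm g 2 (volume : Measure V) with hs
  have hs2 : s ^ 2 = ∫⁻ x, ‖g x‖ₑ ^ 2 := hesi_eLpNorm g
  have hst : s ≠ ∞ := (g.memLp 2 volume).2.ne
  by_cases hs0 : s = 0
  · rw [← hs2, hs0]; simp
  let c : ℂ := ((s.toReal)⁻¹ : ℝ)
  have hc : ‖c‖ₑ = s⁻¹ := by
    have : ‖c‖ = (s⁻¹).toReal := by simp [c]
    rw [← ofReal_norm, this, ENNReal.ofReal_toReal (by simpa using hs0)]
  have hcg : ∀ x, ‖(c • g) x‖ₑ ^ 2 = (s⁻¹) ^ 2 * ‖g x‖ₑ ^ 2 := by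
    intro x
    rw [smul_apply, enorm_smul, hc, mul_pow]
  have hmeas : Measurable fun x => ‖g x‖ₑ ^ 2 :=
    (g.continuous.measurable.enorm).pow_const 2
  have hs1 : (s⁻¹) ^ 2 * s ^ 2 = 1 := by
    rw [← mul_pow, ENNReal.inv_mul_cancel hs0 hst, one_pow]
  have h1 := hC (c • g) (fun ξ hξ => by
    rw [FourierTransform.fourier_smul, smul_apply, hg ξ hξ, smul_zero])
    (by
      simp_rw [hcg]
      rw [lintegral_const_mul _ hmeas, ← hs2, hs1]) F hF hFρ hFκ
  simp_rw [hcg, mul_left_comm _ ((s⁻¹) ^ 2)] at h1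
  have hmeas2 : Measurable fun x : V => ‖x‖ₑ ^ 2 * ‖g x‖ₑ ^ 2 :=
    (measurable_enorm.pow_const 2).mul hmeas
  rw [lintegral_const_mul _ hmeas, lintegral_const_mul _ hmeas2] at h1
  rw [← hs2]
  calc s ^ 2 = s ^ 2 * 1 := (mul_one _).symm
    _ ≤ s ^ 2 * _ := mul_le_mul' le_rfl h1
    _ = ((s⁻¹) ^ 2 * s ^ 2) * (C * (∫⁻ x in F, ‖g x‖ₑ ^ 2) +
          δ * ∫⁻ x, ‖x‖ₑ ^ 2 * ‖g x‖ₑ ^ 2) := by ring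
    _ = _ := by rw [hs1, one_mul]

end HESI

section HESI
variable {V : Type*} [NormedAddCommGroup V] [InnerProductSpace ℝ V] [FiniteDimensional ℝ V]
  [MeasurableSpace V] [BorelSpace V]

theorem hesi_inv_eq (f : SchwartzMap V ℂ) (ξ : V) :
    (𝓕⁻ f : SchwartzMap V ℂ) ξ = (𝓕 f : SchwartzMap V ℂ) (-ξ) := by
  rw [SchwartzMap.fourierInv_coe, SchwartzMap.fourier_coe, Real.fourierInv_eq_fourier_neg]

theorem hesi_four_mul (f θ : SchwartzMap V ℂ) {R S : ℝ}
    (hf : ∀ ξ, R < ‖ξ‖ → 𝓕 f ξ = 0) (hθ : ∀ ξ, S < ‖ξ‖ → 𝓕 θ ξ = 0) (ξ : V)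
    (hξ : R + S < ‖ξ‖) :
    (𝓕 (SchwartzMap.pairing (ContinuousLinearMap.mul ℂ ℂ) f θ) : SchwartzMap V ℂ) ξ = 0 := by
  have h1 : SchwartzMap.convolution (ContinuousLinearMap.mul ℂ ℂ) (𝓕⁻ f) (𝓕⁻ θ) =
      𝓕⁻ (SchwartzMap.pairing (ContinuousLinearMap.mul ℂ ℂ) f θ) := by
    have := SchwartzMap.fourier_convolution (ContinuousLinearMap.mul ℂ ℂ)
      (𝓕⁻ f : SchwartzMap V ℂ) (𝓕⁻ θ : SchwartzMap V ℂ)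
    rw [FourierTransform.fourier_fourierInv_eq, FourierTransform.fourier_fourierInv_eq] at this
    rw [← this, FourierTransform.fourierInv_fourier_eq]
  have h2 := hesi_inv_eq (SchwartzMap.pairing (ContinuousLinearMap.mul ℂ ℂ) f θ) (-ξ)
  rw [neg_neg] at h2
  rw [← h2, ← h1, SchwartzMap.convolution_apply]
  rw [MeasureTheory.convolution]
  apply integral_eq_zero_of_ae
  refine Filter.Eventually.of_forall fun t => ?_
  simp only [ContinuousLinearMap.mul_apply', hesi_inv_eq, Pi.zero_apply, mul_eq_zero]
  by_cases ht : R < ‖-t‖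
  · left; exact hf _ ht
  · right
    apply hθ
    have : ‖ξ‖ ≤ ‖-(-ξ - t)‖ + ‖-t‖ := by
      calc ‖ξ‖ = ‖-(-ξ - t) + -t‖ := by congr 1; abel
        _ ≤ _ := norm_add_le _ _
    linarith

theorem hesi_four_trans (f : SchwartzMap V ℂ) {R : ℝ}
    (hf : ∀ ξ, R < ‖ξ‖ → 𝓕 f ξ = 0) (v ξ : V) (hξ : R < ‖ξ‖) :
    (𝓕 (f.compSubConstCLM ℂ v) : SchwartzMap V ℂ) ξ = 0 := by
  have h0 := hf ξ hξ
  rw [SchwartzMap.fourier_coe] at h0 ⊢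
  have : ⇑(f.compSubConstCLM ℂ v) = ⇑f ∘ fun x => x + (-v) := by
    ext x; simp [sub_eq_add_neg]
  rw [this]
  have := congrFun (VectorFourier.fourierIntegral_comp_add_right Real.fourierChar
    (volume : Measure V) (innerₗ V) f (-v)) ξ
  have h0' : VectorFourier.fourierIntegral Real.fourierChar volume (innerₗ V) (⇑f) ξ = 0 := h0
  rw [h0', smul_zero] at this
  exact this

theorem hesi_tonelli (w p : V → ℝ≥0∞) (hw : Measurable w) (hp : Measurable p) :
    ∫⁻ v, ∫⁻ x, w (x + v) * p x = (∫⁻ x, w x) * ∫⁻ x, p x := by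
  rw [lintegral_lintegral_swap]
  · calc ∫⁻ x, ∫⁻ v, w (x + v) * p x = ∫⁻ x, (∫⁻ v, w v) * p x := by
          congr 1; ext x
          have hm : Measurable fun v => w (x + v) := hw.comp (measurable_const_add x)
          rw [lintegral_mul_const _ hm, lintegral_add_left_eq_self]
      _ = _ := lintegral_const_mul _ hp
  · exact ((hw.comp (measurable_snd.add measurable_fst)).mul
      (hp.comp measurable_snd)).aemeasurable

theorem hesi_theta : ∃ θ : SchwartzMap V ℂ, (∀ ξ, 1 < ‖ξ‖ → 𝓕 θ ξ = 0) ∧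
    ∫⁻ x, ‖θ x‖ₑ ^ 2 ≠ 0 := by
  let χ : ContDiffBump (0 : V) := ⟨1/2, 1, by norm_num, by norm_num⟩
  have hc : HasCompactSupport (fun x => (χ x : ℂ)) :=
    χ.hasCompactSupport.comp_left (g := fun t : ℝ => (t : ℂ)) (by simp)
  have hd : ContDiff ℝ ((⊤ : ℕ∞) : WithTop ℕ∞) (fun x => (χ x : ℂ)) :=
    Complex.ofRealCLM.contDiff.comp χ.contDiff
  let Θ : SchwartzMap V ℂ := hc.toSchwartzMap hd
  refine ⟨𝓕⁻ Θ, fun ξ hξ => ?_, fun h => ?_⟩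
  · rw [FourierTransform.fourier_fourierInv_eq]
    show ((χ ξ : ℝ) : ℂ) = 0
    rw [χ.zero_of_le_dist (by simpa using hξ.le)]; simp
  · set θ : SchwartzMap V ℂ := 𝓕⁻ Θ with hθ
    rw [lintegral_eq_zero_iff ((θ.continuous.measurable.enorm).pow_const 2)] at h
    have h2 : (fun x => θ x) =ᵐ[volume] fun _ => (0 : ℂ) := by
      filter_upwards [h] with x hx
      simpa using hx
    have h3 : (𝓕 θ : SchwartzMap V ℂ) 0 = 0 := by
      rw [SchwartzMap.fourier_coe, Real.fourier_eq]
      apply integral_eq_zero_of_ae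
      filter_upwards [h2] with x hx
      simp [hx]
    rw [hθ, FourierTransform.fourier_fourierInv_eq] at h3
    have : ((χ 0 : ℝ) : ℂ) = 0 := h3
    rw [χ.one_of_mem_closedBall (by simp [χ.rIn_pos.le])] at this
    simp at this

theorem hesi_lint_fin (f : SchwartzMap V ℂ) : ∫⁻ x, ‖f x‖ₑ ^ 2 ≠ ∞ := by
  rw [← hesi_eLpNorm]
  exact ENNReal.pow_ne_top (f.memLp 2 volume).2.ne

theorem hesi_lint_fin2 (f : SchwartzMap V ℂ) : ∫⁻ x, ‖x‖ₑ ^ 2 * ‖f x‖ₑ ^ 2 ≠ ∞ := by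
  have h := (f.integrable_pow_mul volume 2)
  have hb : ∀ x, ‖f x‖ ≤ SchwartzMap.seminorm ℝ 0 0 f := fun x => f.norm_le_seminorm ℝ x
  have h2 : Integrable (fun x => ‖x‖ ^ 2 * ‖f x‖ * SchwartzMap.seminorm ℝ 0 0 f) :=
    h.mul_const _
  refine ne_of_lt (lt_of_le_of_lt (lintegral_mono fun x => ?_) h2.2)
  have e : ‖x‖ₑ ^ 2 * ‖f x‖ₑ ^ 2 = ‖‖x‖ ^ 2 * ‖f x‖ * ‖f x‖‖ₑ := by
    simp [enorm_mul, sq, mul_assoc]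
  show ‖x‖ₑ ^ 2 * ‖f x‖ₑ ^ 2 ≤ _
  rw [e]
  apply enorm_le_iff_norm_le.2
  rw [norm_mul _ ‖f x‖, norm_mul _ (SchwartzMap.seminorm ℝ 0 0 f), norm_norm]
  exact mul_le_mul_of_nonneg_left ((hb x).trans (Real.le_norm_self _)) (norm_nonneg _)

theorem hesi_LS [Nontrivial V] (R ρ : ℝ) {κ : ℝ≥0∞} (hκ : κ ≠ 0) (E : Set V)
    (hE : MeasurableSet E) (hEκ : ∀ v, κ ≤ volume (E ∩ Metric.closedBall v ρ)) :
    ∃ C : ℝ≥0, ∀ f : SchwartzMap V ℂ, (∀ ξ, R < ‖ξ‖ → 𝓕 f ξ = 0) →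
      ∫⁻ x, ‖f x‖ₑ ^ 2 ≤ C * ∫⁻ x in E, ‖f x‖ₑ ^ 2 := by
  obtain ⟨θ, hθ, hT0⟩ := hesi_theta (V := V)
  have hTf := hesi_lint_fin θ
  have hMf := hesi_lint_fin2 θ
  set T := ∫⁻ x, ‖θ x‖ₑ ^ 2 with hT
  set M := ∫⁻ x, ‖x‖ₑ ^ 2 * ‖θ x‖ₑ ^ 2 with hM
  obtain ⟨δ, hδ, hδM⟩ : ∃ δ : ℝ≥0, 0 < δ ∧ 2 * (δ * M) ≤ T := by
    clear_value T M
    lift T to ℝ≥0 using hTf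
    lift M to ℝ≥0 using hMf
    have hT0' : 0 < T := pos_iff_ne_zero.2 (by simpa using hT0)
    refine ⟨T / (2 * (M + 1)), by positivity, ?_⟩
    norm_cast
    calc 2 * (T / (2 * (M + 1)) * M) = T * (M / (M + 1)) := by field_simp
      _ ≤ T * 1 := by
        gcongr
        rw [div_le_one (by positivity)]; exact le_self_add
      _ = T := mul_one _
  obtain ⟨C, hC⟩ := hesi_compact (V := V) (R + 1) ρ hκ hδ
  refine ⟨2 * C, fun f hf => ?_⟩
  have hAf := hesi_lint_fin f
  have mf : Measurable fun x => ‖f x‖ₑ ^ 2 := (f.continuous.measurable.enorm).pow_const 2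
  have mθ : Measurable fun x => ‖θ x‖ₑ ^ 2 := (θ.continuous.measurable.enorm).pow_const 2
  have mθ2 : Measurable fun x => ‖x‖ₑ ^ 2 * ‖θ x‖ₑ ^ 2 := (measurable_enorm.pow_const 2).mul mθ
  set A := ∫⁻ x, ‖f x‖ₑ ^ 2 with hA
  have mE : Measurable (E.indicator fun x => ‖f x‖ₑ ^ 2) := mf.indicator hE
  have key : ∀ v : V, ∫⁻ x, ‖f (x + v)‖ₑ ^ 2 * ‖θ x‖ₑ ^ 2 ≤
      C * (∫⁻ x, (E.indicator fun x => ‖f x‖ₑ ^ 2) (x + v) * ‖θ x‖ₑ ^ 2) +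
      δ * ∫⁻ x, ‖f (x + v)‖ₑ ^ 2 * (‖x‖ₑ ^ 2 * ‖θ x‖ₑ ^ 2) := by
    intro v
    let g : SchwartzMap V ℂ := SchwartzMap.pairing (ContinuousLinearMap.mul ℂ ℂ)
      (f.compSubConstCLM ℂ (-v)) θ
    have hg : ∀ x, ‖g x‖ₑ ^ 2 = ‖f (x + v)‖ₑ ^ 2 * ‖θ x‖ₑ ^ 2 := by
      intro x
      simp [g, enorm_mul, mul_pow]
    have hgs : ∀ ξ, R + 1 < ‖ξ‖ → (𝓕 g : SchwartzMap V ℂ) ξ = 0 := fun ξ hξ =>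
      hesi_four_mul _ _ (fun η hη => hesi_four_trans f hf (-v) η hη) hθ ξ hξ
    let F : Set V := (fun x => x + v) ⁻¹' (E ∩ Metric.closedBall v ρ)
    have hFm : MeasurableSet F :=
      (measurable_add_const v) (hE.inter Metric.isClosed_closedBall.measurableSet)
    have hFρ : F ⊆ Metric.closedBall 0 ρ := by
      rintro x ⟨_, hx⟩
      simpa [dist_eq_norm] using hx
    have hFκ : κ ≤ volume F := by
      rw [measure_preimage_add_right]; exact hEκ v
    have h := hC g hgs F hFm hFρ hFκ
    simp_rw [hg] at h
    refine h.trans (add_le_add (mul_le_mul' le_rfl ?_) (le_of_eq ?_))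
    · rw [← lintegral_indicator hFm]
      refine lintegral_mono fun x => ?_
      by_cases hx : x ∈ F
      · have : x + v ∈ E := hx.1
        simp [hx, this]
      · simp [hx]
    · congr 2; ext x; ring
  have h2 : A * T ≤ C * ((∫⁻ x in E, ‖f x‖ₑ ^ 2) * T) + δ * (A * M) := by
    rw [← lintegral_indicator hE, hA, hT, hM, ← hesi_tonelli _ _ mf mθ,
      ← hesi_tonelli _ _ mE mθ, ← hesi_tonelli _ _ mf mθ2]
    have m1 : Measurable fun v => ∫⁻ x, (E.indicator fun x => ‖f x‖ₑ ^ 2) (x + v) * ‖θ x‖ₑ ^ 2 :=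
      Measurable.lintegral_prod_right' (f := fun p : V × V =>
        (E.indicator fun x => ‖f x‖ₑ ^ 2) (p.2 + p.1) * ‖θ p.2‖ₑ ^ 2)
        ((mE.comp (measurable_snd.add measurable_fst)).mul (mθ.comp measurable_snd))
    have m2 : Measurable fun v => ∫⁻ x, ‖f (x + v)‖ₑ ^ 2 * (‖x‖ₑ ^ 2 * ‖θ x‖ₑ ^ 2) :=
      Measurable.lintegral_prod_right' (f := fun p : V × V =>
        ‖f (p.2 + p.1)‖ₑ ^ 2 * (‖p.2‖ₑ ^ 2 * ‖θ p.2‖ₑ ^ 2))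
        ((mf.comp (measurable_snd.add measurable_fst)).mul (mθ2.comp measurable_snd))
    refine (lintegral_mono key).trans (le_of_eq ?_)
    rw [lintegral_add_left (m1.const_mul _), lintegral_const_mul _ m1, lintegral_const_mul _ m2]
  set B := ∫⁻ x in E, ‖f x‖ₑ ^ 2 with hB
  have h3 : A * T + A * T ≤ (2 * C * B) * T + A * T := by
    calc A * T + A * T = 2 * (A * T) := by ring
      _ ≤ 2 * (C * (B * T) + δ * (A * M)) := by gcongr
      _ = (2 * C * B) * T + A * (2 * (δ * M)) := by ring
      _ ≤ _ := by gcongr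
  have h4 := (ENNReal.add_le_add_iff_right (ENNReal.mul_ne_top hAf hTf)).1 h3
  have h5 := (ENNReal.mul_le_mul_iff_left hT0 hTf).1 h4
  push_cast
  exact h5

end HESI

section HESI
variable {V : Type*} [NormedAddCommGroup V] [InnerProductSpace ℝ V] [FiniteDimensional ℝ V]
  [MeasurableSpace V] [BorelSpace V]

theorem hesi_int_sq (f : SchwartzMap V ℂ) : Integrable (fun x => ‖f x‖ ^ 2) :=
  (f.memLp 2 volume).integrable_norm_pow (by norm_num)

theorem hesi_conv (f : SchwartzMap V ℂ) (s : Set V) :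
    ENNReal.ofReal (∫ x in s, ‖f x‖ ^ 2) = ∫⁻ x in s, ‖f x‖ₑ ^ 2 := by
  rw [ofReal_integral_eq_lintegral_ofReal (hesi_int_sq f).integrableOn
    (Filter.Eventually.of_forall fun x => by positivity)]
  congr 1; ext x
  rw [ENNReal.ofReal_pow (norm_nonneg _), ofReal_norm]

theorem hesi_conv' (f : SchwartzMap V ℂ) :
    ENNReal.ofReal (∫ x, ‖f x‖ ^ 2) = ∫⁻ x, ‖f x‖ₑ ^ 2 := by
  simpa using hesi_conv f Set.univ

theorem hesi_planch (f : SchwartzMap V ℂ) :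
    ∫⁻ x, ‖(𝓕 f : SchwartzMap V ℂ) x‖ₑ ^ 2 = ∫⁻ x, ‖f x‖ₑ ^ 2 := by
  rw [← hesi_conv', ← hesi_conv', SchwartzMap.integral_norm_sq_fourier]

open Laplacian in
theorem hesi_four_lap (f : SchwartzMap V ℂ) (ξ : V) :
    (𝓕 (Δ f) : SchwartzMap V ℂ) ξ = -((2 * π) ^ 2 * ‖ξ‖ ^ 2 : ℝ) * (𝓕 f : SchwartzMap V ℂ) ξ := by
  rw [SchwartzMap.laplacian_eq_fourierMultiplierCLM, FourierTransform.fourier_smul,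
    SchwartzMap.fourierMultiplierCLM_apply, FourierTransform.fourier_fourierInv_eq, smul_apply,
    SchwartzMap.smulLeftCLM_apply_apply (by fun_prop)]
  simp [mul_assoc]

theorem hesi_split (u v : ℂ) : ‖u + v‖ₑ ^ 2 ≤ 2 * ‖u‖ₑ ^ 2 + 2 * ‖v‖ₑ ^ 2 := by
  have h1 : ‖u + v‖ ^ 2 ≤ 2 * ‖u‖ ^ 2 + 2 * ‖v‖ ^ 2 := by
    have := norm_add_le u v
    nlinarith [norm_nonneg (u + v), norm_nonneg u, norm_nonneg v, sq_nonneg (‖u‖ - ‖v‖)]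
  have := ENNReal.ofReal_le_ofReal h1
  rw [ENNReal.ofReal_add (by positivity) (by positivity), ENNReal.ofReal_mul (by norm_num),
    ENNReal.ofReal_mul (by norm_num), ENNReal.ofReal_pow (norm_nonneg _),
    ENNReal.ofReal_pow (norm_nonneg _), ENNReal.ofReal_pow (norm_nonneg _)] at this
  simpa [ofReal_norm] using this

open Laplacian in
theorem hesi_main [Nontrivial V] (ρ : ℝ) {κ : ℝ≥0∞} (hκ : κ ≠ 0) (E : Set V)
    (hE : MeasurableSet E) (hEκ : ∀ v, κ ≤ volume (E ∩ Metric.closedBall v ρ))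
    (a : ℝ) (ha : 0 < a) (b : ℝ) (β : ℝ) (hβ : 0 < β) :
    ∃ C : ℝ, 0 < C ∧ ∀ lam : ℂ, -β < lam.re → ∀ φ : SchwartzMap V ℂ,
      (∫ x, ‖φ x‖ ^ 2) ≤ C * ((∫ x, ‖lam * φ x - ((a : ℂ) - (b : ℂ) * Complex.I) * (Δ φ) x‖ ^ 2)
        + ∫ x in E, ‖φ x‖ ^ 2) := by
  set R : ℝ := (β + 1) / a + 1 with hR
  have hR1 : 1 ≤ R := by rw [hR]; have : 0 < (β + 1) / a := by positivity
                         linarith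
  have haR : β + 1 ≤ a * R := by
    rw [hR, mul_add, mul_div_cancel₀ _ ha.ne']; linarith
  let χ : ContDiffBump (0 : V) := ⟨R, R + 1, by linarith, by linarith⟩
  have hc : HasCompactSupport (fun x => (χ x : ℂ)) :=
    χ.hasCompactSupport.comp_left (g := fun t : ℝ => (t : ℂ)) (by simp)
  have hd : ContDiff ℝ ((⊤ : ℕ∞) : WithTop ℕ∞) (fun x => (χ x : ℂ)) :=
    Complex.ofRealCLM.contDiff.comp χ.contDiff
  let X : SchwartzMap V ℂ := hc.toSchwartzMap hd
  obtain ⟨C, hC⟩ := hesi_LS (R + 1) ρ hκ E hE hEκ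
  refine ⟨4 * C + 2, by positivity, fun lam hlam φ => ?_⟩
  let h : SchwartzMap V ℂ := lam • φ - ((a : ℂ) - (b : ℂ) * Complex.I) • Δ φ
  let p : SchwartzMap V ℂ := 𝓕⁻ (SchwartzMap.pairing (ContinuousLinearMap.mul ℂ ℂ) X (𝓕 φ))
  let q : SchwartzMap V ℂ := φ - p
  have hh : ∀ x, h x = lam * φ x - ((a : ℂ) - (b : ℂ) * Complex.I) * (Δ φ) x := fun x => rfl
  have hp : ∀ ξ, (𝓕 p : SchwartzMap V ℂ) ξ = χ ξ * (𝓕 φ : SchwartzMap V ℂ) ξ := by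
    intro ξ
    simp only [p]
    rw [FourierTransform.fourier_fourierInv_eq]; rfl
  have hq : ∀ ξ, (𝓕 q : SchwartzMap V ℂ) ξ = (1 - χ ξ) * (𝓕 φ : SchwartzMap V ℂ) ξ := by
    intro ξ
    simp only [q]
    rw [sub_eq_add_neg, FourierTransform.fourier_add, FourierTransform.fourier_neg]
    show (𝓕 φ : SchwartzMap V ℂ) ξ + -(𝓕 p : SchwartzMap V ℂ) ξ = _
    rw [hp]; ring
  have hhf : ∀ ξ, (𝓕 h : SchwartzMap V ℂ) ξ =
      (lam + ((a : ℂ) - (b : ℂ) * Complex.I) * ((2 * π) ^ 2 * ‖ξ‖ ^ 2 : ℝ)) *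
        (𝓕 φ : SchwartzMap V ℂ) ξ := by
    intro ξ
    simp only [h]
    rw [sub_eq_add_neg, FourierTransform.fourier_add, FourierTransform.fourier_neg,
      FourierTransform.fourier_smul, FourierTransform.fourier_smul]
    show lam * (𝓕 φ : SchwartzMap V ℂ) ξ +
      -(((a : ℂ) - (b : ℂ) * Complex.I) * (𝓕 (Δ φ) : SchwartzMap V ℂ) ξ) = _
    rw [hesi_four_lap]; ring
  have hqh : ∫⁻ x, ‖q x‖ₑ ^ 2 ≤ ∫⁻ x, ‖h x‖ₑ ^ 2 := by
    rw [← hesi_planch q, ← hesi_planch h]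
    refine lintegral_mono fun ξ => ?_
    show ‖(𝓕 q : SchwartzMap V ℂ) ξ‖ₑ ^ 2 ≤ ‖(𝓕 h : SchwartzMap V ℂ) ξ‖ₑ ^ 2
    rw [hq, hhf, enorm_mul, enorm_mul]
    gcongr ?_ ^ 2
    apply mul_le_mul' _ le_rfl
    apply enorm_le_iff_norm_le.2
    by_cases hξ : ‖ξ‖ ≤ R
    · rw [χ.one_of_mem_closedBall (by simpa [χ] using hξ)]
      simp
    · push Not at hξ
      have e1 : ‖(1 : ℂ) - (χ ξ : ℂ)‖ ≤ 1 := by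
        rw [← Complex.ofReal_one, ← Complex.ofReal_sub, Complex.norm_real, Real.norm_eq_abs,
          abs_le]
        have := χ.nonneg' ξ
        have := χ.le_one (x := ξ)
        constructor <;> linarith
      refine e1.trans (le_trans ?_ (Complex.re_le_norm _))
      have e2 : (lam + ((a : ℂ) - (b : ℂ) * Complex.I) * ((2 * π) ^ 2 * ‖ξ‖ ^ 2 : ℝ)).re =
          lam.re + a * ((2 * π) ^ 2 * ‖ξ‖ ^ 2) := by
        rw [Complex.add_re, Complex.re_mul_ofReal]; simp
      rw [e2]
      have e3 : R ≤ (2 * π) ^ 2 * ‖ξ‖ ^ 2 := by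
        have : 1 ≤ (2 * π) ^ 2 := by nlinarith [Real.pi_gt_three]
        have : R ≤ ‖ξ‖ ^ 2 := by nlinarith
        nlinarith
      have := mul_le_mul_of_nonneg_left e3 ha.le
      linarith
  have hpE := hC p (fun ξ hξ => by
    rw [hp, χ.zero_of_le_dist (by simpa [χ] using hξ.le)]; simp)
  have hφ : ∀ x, φ x = p x + q x := fun x => by
    show φ x = p x + (φ x - p x); ring
  have hpx : ∀ x, p x = φ x + -q x := fun x => by rw [hφ]; ring
  have mq : Measurable fun x => ‖q x‖ₑ ^ 2 := (q.continuous.measurable.enorm).pow_const 2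
  have mp : Measurable fun x => ‖p x‖ₑ ^ 2 := (p.continuous.measurable.enorm).pow_const 2
  have mφ : Measurable fun x => ‖φ x‖ₑ ^ 2 := (φ.continuous.measurable.enorm).pow_const 2
  have s1 : ∫⁻ x, ‖φ x‖ₑ ^ 2 ≤ 2 * (∫⁻ x, ‖p x‖ₑ ^ 2) + 2 * ∫⁻ x, ‖q x‖ₑ ^ 2 := by
    rw [← lintegral_const_mul _ mp, ← lintegral_const_mul _ mq,
      ← lintegral_add_left (mp.const_mul 2)]
    refine lintegral_mono fun x => ?_
    show ‖φ x‖ₑ ^ 2 ≤ _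
    rw [hφ]; exact hesi_split _ _
  have s2 : ∫⁻ x in E, ‖p x‖ₑ ^ 2 ≤
      2 * (∫⁻ x in E, ‖φ x‖ₑ ^ 2) + 2 * ∫⁻ x, ‖q x‖ₑ ^ 2 := by
    refine le_trans ?_ (add_le_add le_rfl (mul_le_mul' le_rfl (setLIntegral_le_lintegral E _)))
    rw [← lintegral_const_mul _ mφ, ← lintegral_const_mul _ mq,
      ← lintegral_add_left (mφ.const_mul 2)]
    refine lintegral_mono fun x => ?_
    show ‖p x‖ₑ ^ 2 ≤ _
    rw [hpx, ← enorm_neg (q x)]; exact hesi_split _ _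
  have s3 : ∫⁻ x, ‖φ x‖ₑ ^ 2 ≤
      (4 * C + 2) * ((∫⁻ x, ‖h x‖ₑ ^ 2) + ∫⁻ x in E, ‖φ x‖ₑ ^ 2) := by
    set Q := ∫⁻ x, ‖q x‖ₑ ^ 2
    set H := ∫⁻ x, ‖h x‖ₑ ^ 2
    set P := ∫⁻ x in E, ‖φ x‖ₑ ^ 2
    calc ∫⁻ x, ‖φ x‖ₑ ^ 2 ≤ 2 * (C * (2 * P + 2 * H)) + 2 * H := by
          refine s1.trans (add_le_add (mul_le_mul' le_rfl (hpE.trans ?_)) (mul_le_mul' le_rfl hqh))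
          exact mul_le_mul' le_rfl (s2.trans (add_le_add le_rfl (mul_le_mul' le_rfl hqh)))
      _ ≤ 2 * (C * (2 * P + 2 * H)) + 2 * H + 2 * P := le_self_add
      _ = _ := by ring
  rw [← hesi_conv', ← hesi_conv', ← hesi_conv, ← ENNReal.ofReal_add (by positivity) (by positivity),
    show (4 * (C : ℝ≥0∞) + 2) = ENNReal.ofReal (4 * C + 2) by
      rw [ENNReal.ofReal_add (by positivity) (by positivity), ENNReal.ofReal_mul (by positivity)]
      simp, ← ENNReal.ofReal_mul (by positivity)] at s3
  exact (ENNReal.ofReal_le_ofReal_iff (by positivity)).1 s3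

end HESI

end HESIhelpers

/-- Frequency-domain (Hautus-type) inequality for the Ginzburg–Landau operator on a thick
set: if `E ⊆ ℝ^N` is thick, `a > 0`, `b ∈ ℝ` and `β > 0`, then there is `C > 0` such that
for all `λ` with `Re λ > -β` and all Schwartz functions `φ`,
`∫|φ|² ≤ C (∫|λφ - (a - i b)Δφ|² + ∫_E |φ|²)`. -/
theorem ginzburg_landau_HESI
    {N : ℕ} (hN : 0 < N) (E : Set (Fin N → ℝ)) (hE : MeasurableSet E)
    (hthick : ∃ ε : ℝ, 0 < ε ∧ ∃ L : ℝ, 0 < L ∧ ∀ x : Fin N → ℝ,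
      ENNReal.ofReal (ε * L ^ N) ≤ volume (E ∩ {y | ∀ i, |y i - x i| ≤ L / 2}))
    (a : ℝ) (ha : 0 < a) (b : ℝ) (β : ℝ) (hβ : 0 < β) :
    ∃ C : ℝ, 0 < C ∧ ∀ lam : ℂ, -β < lam.re → ∀ φ : SchwartzMap (Fin N → ℝ) ℂ,
      (∫ x : Fin N → ℝ, ‖φ x‖ ^ 2)
        ≤ C * ((∫ x : Fin N → ℝ,
            ‖lam * φ x - ((a : ℂ) - (b : ℂ) * Complex.I) *
              (∑ j, fderiv ℝ (fun y => fderiv ℝ (⇑φ) y (Pi.single j 1)) x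
                (Pi.single j 1))‖ ^ 2)
          + ∫ x in E, ‖φ x‖ ^ 2) := by
  obtain ⟨ε, hε, L, hL, hthick⟩ := hthick
  have : Nonempty (Fin N) := ⟨⟨0, hN⟩⟩
  have : Nontrivial (EuclideanSpace ℝ (Fin N)) := inferInstance
  let e := PiLp.continuousLinearEquiv 2 ℝ (fun _ : Fin N => ℝ)
  have me : MeasurePreserving (e : EuclideanSpace ℝ (Fin N) → (Fin N → ℝ)) :=
    PiLp.volume_preserving_ofLp (Fin N)
  have mee : MeasurableEmbedding (e : EuclideanSpace ℝ (Fin N) → (Fin N → ℝ)) :=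
    e.toHomeomorph.measurableEmbedding
  have hk : ENNReal.ofReal (ε * L ^ N) ≠ 0 := by
    have : 0 < ε * L ^ N := by positivity
    simpa using this
  obtain ⟨C, hC, H⟩ := hesi_main (V := EuclideanSpace ℝ (Fin N)) (N * L) hk (e ⁻¹' E)
    (me.measurable hE) (fun v => by
      refine (hthick (e v)).trans ?_
      have hQ : MeasurableSet {y : Fin N → ℝ | ∀ i, |y i - e v i| ≤ L / 2} := by
        have : {y : Fin N → ℝ | ∀ i, |y i - e v i| ≤ L / 2} =
            ⋂ i, {y : Fin N → ℝ | |y i - e v i| ≤ L / 2} := by ext; simp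
        rw [this]
        exact MeasurableSet.iInter fun i => measurableSet_le (by fun_prop) (by fun_prop)
      rw [← me.measure_preimage (hE.inter hQ).nullMeasurableSet]
      apply measure_mono
      rintro x ⟨hx1, hx2⟩
      refine ⟨hx1, ?_⟩
      rw [Metric.mem_closedBall, EuclideanSpace.dist_eq]
      have h1 : ∀ i, dist (x i) (v i) ≤ L := fun i => by
        have := hx2 i
        rw [Real.dist_eq]
        exact le_trans this (by linarith)
      have hN1 : (1 : ℝ) ≤ N := by exact_mod_cast hN
      apply Real.sqrt_le_iff.2 ⟨by positivity, ?_⟩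
      calc ∑ i, dist (x i) (v i) ^ 2 ≤ ∑ i : Fin N, L ^ 2 :=
            Finset.sum_le_sum fun i _ => by gcongr; exact h1 i
        _ = N * L ^ 2 := by simp
        _ ≤ N * (N * L ^ 2) := by
          have : (0 : ℝ) ≤ N * L ^ 2 := by positivity
          nlinarith
        _ = _ := by ring) a ha b β hβ
  refine ⟨C, hC, fun lam hlam φ => ?_⟩
  have h := H lam hlam (SchwartzMap.compCLMOfContinuousLinearEquiv ℂ e φ)
  have hlap : ∀ x, (Laplacian.laplacian (SchwartzMap.compCLMOfContinuousLinearEquiv ℂ e φ) :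
      SchwartzMap (EuclideanSpace ℝ (Fin N)) ℂ) x =
      ∑ j, fderiv ℝ (fun y => fderiv ℝ (⇑φ) y (Pi.single j 1)) (e x) (Pi.single j 1) := by
    intro x
    rw [SchwartzMap.laplacian_eq_sum (EuclideanSpace.basisFun (Fin N) ℝ), sum_apply]
    refine Finset.sum_congr rfl fun j _ => ?_
    have hb : e (EuclideanSpace.basisFun (Fin N) ℝ j) = Pi.single j 1 := by
      ext i; simp [e, Pi.single_apply]
    rw [SchwartzMap.lineDerivOp_compCLMOfContinuousLinearEquiv,
      SchwartzMap.lineDerivOp_compCLMOfContinuousLinearEquiv, hb]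
    rfl
  simp_rw [hlap] at h
  simp only [SchwartzMap.compCLMOfContinuousLinearEquiv_apply, Function.comp_apply] at h
  rw [me.integral_comp mee (fun y => ‖φ y‖ ^ 2),
    me.integral_comp mee (fun x => ‖lam * φ x - ((a : ℂ) - (b : ℂ) * Complex.I) *
              (∑ j, fderiv ℝ (fun y => fderiv ℝ (⇑φ) y (Pi.single j 1)) x
                (Pi.single j 1))‖ ^ 2),
    me.setIntegral_preimage_emb mee (fun y => ‖φ y‖ ^ 2) E] at h
  exact h
end

section
/- Let N be a positive integer, s ∈ (0,1), ω ⊆ ℝ^N a thick measurable set. Then for every β > 0 there exists C > 0 such that for every λ ∈ ℂ with Re λ > −β and every Schwartz function φ : ℝ^N → ℂ, (Re λ + β)²·∫_{ℝ^N} |φ(x)|² dx ≤ C·( ∫_{ℝ^N} |(λ + (2π|ξ|)^s)·φ̂(ξ)|² dξ + ∫_ω |φ(x)|² dx ), where φ̂(ξ) = ∫_{ℝ^N} φ(x)·e^{−2πi⟨x,ξ⟩} dx is the Fourier transform of φ. -/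
open MeasureTheory Real

open Filter Topology in
theorem aux_zero_set {V : Type*} [NormedAddCommGroup V] [InnerProductSpace ℝ V]
    [FiniteDimensional ℝ V] [MeasurableSpace V] [BorelSpace V]
    (h : V → ℂ) (hc : Continuous h)
    (ha : ∀ x v : V, AnalyticOnNhd ℝ (fun t : ℝ => h (x + t • v)) Set.univ)
    (x₀ : V) (hx₀ : h x₀ ≠ 0) : volume {x | h x = 0} = 0 := by
  set Z : Set V := {v | h (x₀ + v) = 0} with hZ
  have hZm : MeasurableSet Z :=
    (isClosed_eq (hc.comp (continuous_const.add continuous_id)) continuous_const).measurableSet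
  have h1 : ∀ v : V, volume {t : ℝ | t • v ∈ Z} = 0 := by
    intro v
    have hA := ha x₀ v
    rcases hA.eqOn_zero_or_eventually_ne_zero_of_preconnected isPreconnected_univ with h0 | h0
    · exact absurd (by simpa using h0 (Set.mem_univ (0:ℝ))) hx₀
    · have := ae_restrict_le_codiscreteWithin (μ := (volume : Measure ℝ)) MeasurableSet.univ h0
      rw [Measure.restrict_univ] at this
      have h3 : ∀ᵐ t : ℝ, h (x₀ + t • v) ≠ 0 := this
      simpa [ae_iff, hZ] using h3
  have hP : MeasurableSet {p : V × ℝ | p.2 • p.1 ∈ Z} :=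
    hZm.preimage (by fun_prop)
  have h2 : ((volume : Measure V).prod (volume : Measure ℝ)) {p : V × ℝ | p.2 • p.1 ∈ Z} = 0 := by
    rw [Measure.measure_prod_null hP]
    exact Eventually.of_forall h1
  have hP' : MeasurableSet {p : ℝ × V | p.1 • p.2 ∈ Z} :=
    hZm.preimage (by fun_prop)
  have h3 : ∀ᵐ t : ℝ, volume {v : V | t • v ∈ Z} = 0 := by
    have h4 := (Measure.prod_swap (μ := (volume : Measure V)) (ν := (volume : Measure ℝ)))
    have h5 : ((volume : Measure ℝ).prod (volume : Measure V)) {p : ℝ × V | p.1 • p.2 ∈ Z} = 0 := by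
      rw [← h4, Measure.map_apply measurable_swap hP']
      exact h2
    rw [Measure.measure_prod_null hP'] at h5
    exact h5
  have h6 : ∀ᵐ t : ℝ, t ≠ 0 := by simp [ae_iff]
  obtain ⟨t, ht, ht0⟩ := (h3.and h6).exists
  have h7 : volume Z = 0 := by
    have : {v : V | t • v ∈ Z} = (t • ·) ⁻¹' Z := rfl
    rw [this, Measure.addHaar_preimage_smul _ ht0] at ht
    simpa [ht0] using ht
  have h8 : Z = (x₀ + ·) ⁻¹' {x | h x = 0} := rfl
  rwa [h8, measure_preimage_add] at h7

open Filter Topology in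
theorem aux_small {V : Type*} [NormedAddCommGroup V] [InnerProductSpace ℝ V]
    [FiniteDimensional ℝ V] [MeasurableSpace V] [BorelSpace V]
    (h : V → ℂ) (hc : Continuous h) (h0 : volume {x | h x = 0} = 0)
    (Q : Set V) (hQ : IsCompact Q) (ε : ℝ) (hε : 0 < ε) :
    ∃ τ : ℝ, 0 < τ ∧ volume (Q ∩ {x | ‖h x‖ ≤ τ}) ≤ ENNReal.ofReal ε := by
  have hlim : Tendsto (fun n : ℕ => volume (Q ∩ {x | ‖h x‖ ≤ 1 / ((n:ℝ) + 1)})) atTop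
      (𝓝 (volume (⋂ n : ℕ, (Q ∩ {x | ‖h x‖ ≤ 1 / ((n:ℝ) + 1)})))) := by
    apply tendsto_measure_iInter_atTop
    · intro n
      exact (hQ.measurableSet.inter
        (isClosed_le hc.norm continuous_const).measurableSet).nullMeasurableSet
    · intro m n hmn x hx
      have hx2 : ‖h x‖ ≤ 1 / ((n:ℝ) + 1) := hx.2
      refine ⟨hx.1, hx2.trans ?_⟩
      exact one_div_le_one_div_of_le (by positivity) (by simpa using hmn)
    · exact ⟨0, ((measure_mono Set.inter_subset_left).trans_lt hQ.measure_lt_top).ne⟩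
  have hz : volume (⋂ n : ℕ, (Q ∩ {x | ‖h x‖ ≤ 1 / ((n:ℝ) + 1)})) = 0 := by
    refine measure_mono_null ?_ h0
    intro x hx
    have : ∀ n : ℕ, ‖h x‖ ≤ 1 / ((n:ℝ) + 1) := fun n => (Set.mem_iInter.1 hx n).2
    have h2 := ge_of_tendsto' (tendsto_one_div_add_atTop_nhds_zero_nat (𝕜 := ℝ)) this
    simpa using h2
  rw [hz] at hlim
  have := hlim.eventually (ge_mem_nhds (show (0:ENNReal) < ENNReal.ofReal ε by simpa using hε))
  obtain ⟨n, hn⟩ := this.exists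
  exact ⟨_, by positivity, hn⟩

open Filter Topology in
theorem aux_compact {V X : Type*} [NormedAddCommGroup V] [InnerProductSpace ℝ V]
    [FiniteDimensional ℝ V] [MeasurableSpace V] [BorelSpace V]
    [NormedAddCommGroup X] [NormedSpace ℂ X]
    (k : V → X) (hk : Continuous k)
    (ha : ∀ x v : V, AnalyticOnNhd ℝ (fun t : ℝ => k (x + t • v)) Set.univ)
    (Q : Set V) (hQ : IsCompact Q) (ε : ℝ) (hε : 0 < ε) (δ : ℝ) (hδ : 0 < δ) :
    ∃ C : ℝ, 0 < C ∧ ∀ ψ : X →L[ℂ] ℂ, ∀ E : Set V, E ⊆ Q → MeasurableSet E →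
      ENNReal.ofReal ε ≤ volume E →
      ∫ x in Q, ‖ψ (k x)‖ ^ 2 ≤ C * (∫ x in E, ‖ψ (k x)‖ ^ 2) + δ * ‖ψ‖ ^ 2 := by
  classical
  have hcont : ∀ ψ : X →L[ℂ] ℂ, Continuous fun x => ‖ψ (k x)‖ ^ 2 := fun ψ => by fun_prop
  have hint : ∀ ψ : X →L[ℂ] ℂ, IntegrableOn (fun x => ‖ψ (k x)‖ ^ 2) Q := fun ψ =>
    (hcont ψ).continuousOn.integrableOn_compact hQ
  have hfin : volume Q ≠ ⊤ := hQ.measure_lt_top.ne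
  obtain ⟨B, hB⟩ : ∃ B : ℝ, ∀ x ∈ Q, ‖k x‖ ≤ B := by
    obtain ⟨B, hB⟩ := (hQ.image hk).isBounded.exists_norm_le
    exact ⟨B, fun x hx => hB _ ⟨x, hx, rfl⟩⟩
  -- the unit ball version
  suffices H : ∃ C : ℝ, 0 < C ∧ ∀ ψ : X →L[ℂ] ℂ, ‖ψ‖ ≤ 1 → ∀ E : Set V, E ⊆ Q →
      MeasurableSet E → ENNReal.ofReal ε ≤ volume E →
      ∫ x in Q, ‖ψ (k x)‖ ^ 2 ≤ C * (∫ x in E, ‖ψ (k x)‖ ^ 2) + δ by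
    obtain ⟨C, hC, H⟩ := H
    refine ⟨C, hC, fun ψ E hE hEm hEv => ?_⟩
    rcases eq_or_ne ψ 0 with rfl | hψ
    · simp
    have hn : 0 < ‖ψ‖ := norm_pos_iff.2 hψ
    have := H (((‖ψ‖⁻¹ : ℝ) : ℂ) • ψ) (by
      rw [norm_smul]; simp [hn.ne']) E hE hEm hEv
    simp only [smul_apply, norm_smul, mul_pow, integral_const_mul] at this
    simp only [Complex.norm_real, norm_inv, norm_norm] at this
    have h2 := mul_le_mul_of_nonneg_left this (sq_nonneg ‖ψ‖)
    have h3 : ‖ψ‖ ^ 2 * (‖ψ‖⁻¹ ^ 2) = 1 := by field_simp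
    generalize (∫ x in Q, ‖ψ (k x)‖ ^ 2) = a at *
    generalize (∫ x in E, ‖ψ (k x)‖ ^ 2) = b at *
    linear_combination h2 + (C * b - a) * h3
  -- weak star compactness
  set S : Set (WeakDual ℂ X) := WeakDual.toStrongDual ⁻¹' Metric.closedBall 0 1 with hS
  have hSc : IsCompact S := WeakDual.isCompact_closedBall (𝕜 := ℂ) (E := X) 0 1
  have hSn : ∀ ψ ∈ S, ∀ y : X, ‖ψ y‖ ≤ ‖y‖ := by
    intro ψ hψ y
    have h1 : ‖WeakDual.toStrongDual ψ‖ ≤ 1 := by simpa [hS] using hψ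
    simpa using (WeakDual.toStrongDual ψ).le_of_opNorm_le h1 y
  -- uniform closeness
  have hunif : ∀ ψ₀ ∈ S, ∀ τ : ℝ, 0 < τ → ∃ t ∈ 𝓝[S] ψ₀, ∀ ψ ∈ t, ψ ∈ S ∧
      ∀ x ∈ Q, ‖ψ (k x) - ψ₀ (k x)‖ < τ := by
    intro ψ₀ hψ₀ τ hτ
    obtain ⟨T, hTf, hT⟩ := Metric.totallyBounded_iff.1 (hQ.image hk).totallyBounded (τ / 3)
      (by positivity)
    have hev : ∀ y ∈ T, ∀ᶠ ψ in 𝓝[S] ψ₀, ‖ψ y - ψ₀ y‖ < τ / 3 := by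
      intro y _
      have hcy : Continuous fun ψ : WeakDual ℂ X => ‖ψ y - ψ₀ y‖ :=
        ((WeakDual.eval_continuous y).sub continuous_const).norm
      have h2 := (hcy.tendsto ψ₀).eventually (Iio_mem_nhds (b := ‖ψ₀ y - ψ₀ y‖) (a := τ / 3) (by simpa using hτ))
      exact h2.filter_mono nhdsWithin_le_nhds
    have hev2 : ∀ᶠ ψ in 𝓝[S] ψ₀, (∀ y ∈ T, ‖ψ y - ψ₀ y‖ < τ / 3) ∧ ψ ∈ S :=
      ((eventually_all_finite hTf).2 hev).and self_mem_nhdsWithin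
    refine ⟨_, hev2, fun ψ hψ => ⟨hψ.2, fun x hx => ?_⟩⟩
    obtain ⟨y, hyT, hy⟩ := Set.mem_iUnion₂.1 (hT ⟨x, hx, rfl⟩)
    rw [Metric.mem_ball, dist_eq_norm] at hy
    have e : ψ (k x) - ψ₀ (k x) = ψ (k x - y) - ψ₀ (k x - y) + (ψ y - ψ₀ y) := by
      rw [map_sub, map_sub]; ring
    rw [e]
    have h1 := hSn ψ hψ.2 (k x - y)
    have h2 := hSn ψ₀ hψ₀ (k x - y)
    have h3 := hψ.1 y hyT
    calc _ ≤ ‖ψ (k x - y) - ψ₀ (k x - y)‖ + ‖ψ y - ψ₀ y‖ := norm_add_le _ _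
      _ ≤ ‖ψ (k x - y)‖ + ‖ψ₀ (k x - y)‖ + ‖ψ y - ψ₀ y‖ := by gcongr; exact norm_sub_le _ _
      _ < τ := by linarith
  have key : ∃ C : ℝ, 0 < C ∧ ∀ ψ ∈ S, ∀ E : Set V, E ⊆ Q →
      MeasurableSet E → ENNReal.ofReal ε ≤ volume E →
      ∫ x in Q, ‖ψ (k x)‖ ^ 2 ≤ C * (∫ x in E, ‖ψ (k x)‖ ^ 2) + δ := by
    refine hSc.induction_on (p := fun U => ∃ C : ℝ, 0 < C ∧ ∀ ψ ∈ U, ∀ E : Set V, E ⊆ Q →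
      MeasurableSet E → ENNReal.ofReal ε ≤ volume E →
      ∫ x in Q, ‖ψ (k x)‖ ^ 2 ≤ C * (∫ x in E, ‖ψ (k x)‖ ^ 2) + δ) ?_ ?_ ?_ ?_
    · exact ⟨1, one_pos, by simp⟩
    · rintro s t hst ⟨C, hC, h⟩
      exact ⟨C, hC, fun ψ hψ => h ψ (hst hψ)⟩
    · rintro s t ⟨C, hC, h⟩ ⟨C', hC', h'⟩
      refine ⟨C + C', by positivity, fun ψ hψ E hE hEm hEv => ?_⟩
      have h0 : 0 ≤ ∫ x in E, ‖ψ (k x)‖ ^ 2 := integral_nonneg fun x => by positivity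
      rcases hψ with hψ | hψ
      · have := h ψ hψ E hE hEm hEv; nlinarith
      · have := h' ψ hψ E hE hEm hEv; nlinarith
    · intro ψ₀ hψ₀
      by_cases hzero : ∀ x ∈ Q, ψ₀ (k x) = 0
      · -- degenerate case
        set q := volume.real Q with hq
        have hq0 : 0 ≤ q := measureReal_nonneg
        obtain ⟨t, ht, htt⟩ := hunif ψ₀ hψ₀ (√(δ / (q + 1))) (by positivity)
        refine ⟨t, ht, 1, one_pos, fun ψ hψ E hE hEm hEv => ?_⟩
        have h0 : 0 ≤ ∫ x in E, ‖ψ (k x)‖ ^ 2 := integral_nonneg fun x => by positivity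
        have h1 : ∫ x in Q, ‖ψ (k x)‖ ^ 2 ≤ ∫ x in Q, δ / (q + 1) := by
          refine setIntegral_mono_on (hint (WeakDual.toStrongDual ψ)) (integrableOn_const hfin)
            hQ.measurableSet fun x hx => ?_
          have h2 := (htt ψ hψ).2 x hx
          rw [hzero x hx, sub_zero] at h2
          calc ‖ψ (k x)‖ ^ 2 ≤ (√(δ / (q + 1))) ^ 2 := by gcongr
            _ = _ := Real.sq_sqrt (by positivity)
        rw [setIntegral_const, smul_eq_mul, ← hq] at h1
        have h2 : q * (δ / (q + 1)) ≤ δ := by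
          rw [mul_div_assoc', div_le_iff₀ (by positivity)]; nlinarith
        linarith
      · push Not at hzero
        obtain ⟨x₀, hx₀Q, hx₀⟩ := hzero
        have hc0 : Continuous fun x => ψ₀ (k x) := (WeakDual.toStrongDual ψ₀).continuous.comp hk
        have hz0 := aux_zero_set (fun x => ψ₀ (k x)) hc0 (fun x v t _ => by
          have h1 := ha x v t (Set.mem_univ _)
          exact (((WeakDual.toStrongDual ψ₀).restrictScalars ℝ).analyticAt _).comp h1) x₀ hx₀
        obtain ⟨τ, hτ, hτv⟩ := aux_small _ hc0 hz0 Q hQ (ε / 2) (by positivity)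
        obtain ⟨t, ht, htt⟩ := hunif ψ₀ hψ₀ (τ / 2) (by positivity)
        set M := B ^ 2 * volume.real Q with hM
        have hM0 : 0 ≤ M := mul_nonneg (sq_nonneg _) measureReal_nonneg
        set m := (τ / 2) ^ 2 * (ε / 2) with hm
        have hm0 : 0 < m := by positivity
        refine ⟨t, ht, (M + 1) / m, by positivity, fun ψ hψ E hE hEm hEv => ?_⟩
        have h1 : ∫ x in Q, ‖ψ (k x)‖ ^ 2 ≤ M := by
          have : ∫ x in Q, ‖ψ (k x)‖ ^ 2 ≤ ∫ x in Q, B ^ 2 := by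
            refine setIntegral_mono_on (hint (WeakDual.toStrongDual ψ)) (integrableOn_const hfin)
              hQ.measurableSet fun x hx => ?_
            have := (hSn ψ (htt ψ hψ).1 (k x)).trans (hB x hx)
            gcongr
          rw [setIntegral_const, smul_eq_mul] at this
          rw [hM]; linarith
        have hfE : volume E ≠ ⊤ := ((measure_mono hE).trans_lt hQ.measure_lt_top).ne
        set W := Q ∩ {x | ‖ψ₀ (k x)‖ ≤ τ} with hW
        have hWm : MeasurableSet W := hQ.measurableSet.inter
          (isClosed_le hc0.norm continuous_const).measurableSet
        have h2 : ε / 2 ≤ volume.real (E \ W) := by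
          have ha1 : volume E ≤ volume (E \ W) + volume W := by
            refine (measure_mono ?_).trans (measure_union_le _ _)
            intro x hx; by_cases hxW : x ∈ W
            · exact Or.inr hxW
            · exact Or.inl ⟨hx, hxW⟩
          have ha2 : ENNReal.ofReal ε ≤ volume (E \ W) + ENNReal.ofReal (ε / 2) :=
            hEv.trans (ha1.trans (by gcongr))
          have hne : volume (E \ W) ≠ ⊤ :=
            ((measure_mono Set.sdiff_subset).trans_lt (lt_top_iff_ne_top.2 hfE)).ne
          have ha3 := ENNReal.toReal_mono (by simp [hne]) ha2
          rw [ENNReal.toReal_add hne (by simp), ENNReal.toReal_ofReal hε.le,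
            ENNReal.toReal_ofReal (by positivity)] at ha3
          rw [measureReal_def]; linarith
        have h3 : m ≤ ∫ x in E, ‖ψ (k x)‖ ^ 2 := by
          have hiE : IntegrableOn (fun x => ‖ψ (k x)‖ ^ 2) E :=
            (hint (WeakDual.toStrongDual ψ)).mono_set hE
          have hb1 : ∫ x in E \ W, ‖ψ (k x)‖ ^ 2 ≤ ∫ x in E, ‖ψ (k x)‖ ^ 2 :=
            setIntegral_mono_set hiE (Eventually.of_forall fun x => by positivity)
              (Set.sdiff_subset.eventuallyLE)
          have hb2 : ∫ x in E \ W, (τ / 2) ^ 2 ≤ ∫ x in E \ W, ‖ψ (k x)‖ ^ 2 := by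
            refine setIntegral_mono_on ?_ (hiE.mono_set Set.sdiff_subset) (hEm.diff hWm)
              fun x hx => ?_
            · have hne : volume (E \ W) ≠ ⊤ :=
                ((measure_mono Set.sdiff_subset).trans_lt (lt_top_iff_ne_top.2 hfE)).ne
              exact integrableOn_const hne
            have hx1 : τ < ‖ψ₀ (k x)‖ := by
              by_contra hcon
              exact hx.2 ⟨hE hx.1, not_lt.1 hcon⟩
            have hx2 := (htt ψ hψ).2 x (hE hx.1)
            have hx3 : ‖ψ₀ (k x)‖ ≤ ‖ψ (k x)‖ + ‖ψ (k x) - ψ₀ (k x)‖ := by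
              have := norm_sub_le (ψ (k x)) (ψ (k x) - ψ₀ (k x))
              simpa using this
            have : τ / 2 ≤ ‖ψ (k x)‖ := by linarith
            gcongr
          rw [setIntegral_const, smul_eq_mul] at hb2
          have : (τ / 2) ^ 2 * (ε / 2) ≤ volume.real (E \ W) * (τ / 2) ^ 2 := by
            rw [mul_comm]; gcongr
          rw [hm]; linarith
        have h4 : M + 1 ≤ (M + 1) / m * ∫ x in E, ‖ψ (k x)‖ ^ 2 := by
          rw [div_mul_eq_mul_div, le_div_iff₀ hm0]; gcongr
        linarith
  obtain ⟨C, hC, h⟩ := key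
  refine ⟨C, hC, fun ψ hψ => ?_⟩
  exact h (StrongDual.toWeakDual ψ) (by simpa [hS] using hψ)

theorem aux_kernel {V : Type*} [NormedAddCommGroup V] [InnerProductSpace ℝ V]
    [FiniteDimensional ℝ V] (ρ : ℝ) :
    ∃ k : V → C(Metric.closedBall (0 : V) ρ, ℂ), Continuous k ∧
      (∀ x v : V, AnalyticOnNhd ℝ (fun t : ℝ => k (x + t • v)) Set.univ) ∧
      ∀ x ξ, k x ξ = Complex.exp (((-2 * π * inner ℝ (ξ : V) x : ℝ) : ℂ) * Complex.I) := by
  let T : V →ₗ[ℝ] C(Metric.closedBall (0 : V) ρ, ℂ) :=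
    { toFun := fun x => ⟨fun ξ => ((-2 * π * inner ℝ (ξ : V) x : ℝ) : ℂ) * Complex.I, by fun_prop⟩
      map_add' := fun x y => by
        ext ξ
        simp only [ContinuousMap.coe_mk, ContinuousMap.add_apply, inner_add_right]
        push_cast; ring
      map_smul' := fun c x => by
        ext ξ
        simp only [ContinuousMap.coe_mk, ContinuousMap.smul_apply, inner_smul_right,
          RingHom.id_apply, Complex.real_smul]
        push_cast; ring }
  let T' : V →L[ℝ] C(Metric.closedBall (0 : V) ρ, ℂ) := LinearMap.toContinuousLinearMap T
  refine ⟨fun x => NormedSpace.exp (T' x), ?_, ?_, ?_⟩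
  · exact NormedSpace.exp_continuous.comp T'.continuous
  · intro x v t _
    have h1 : AnalyticAt ℝ (fun t : ℝ => T' (x + t • v)) t := by
      apply (T'.analyticAt _).comp
      fun_prop
    exact AnalyticAt.fun_comp (NormedSpace.exp_analytic (𝕂 := ℝ) (T' (x + t • v))) h1
  · intro x ξ
    have h1 := NormedSpace.map_exp (ContinuousMap.evalAlgHom ℂ ℂ ξ)
      (continuous_eval_const ξ) (T' x)
    rw [Complex.exp_eq_exp_ℂ]
    exact h1

theorem aux_cs {V : Type*} [NormedAddCommGroup V] [InnerProductSpace ℝ V]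
    [FiniteDimensional ℝ V] [MeasurableSpace V] [BorelSpace V] (ρ : ℝ) (hρ : 0 < ρ)
    (c : SchwartzMap V ℂ) :
    (∫ ξ in Metric.closedBall (0 : V) ρ, ‖c ξ‖) ^ 2 ≤
      volume.real (Metric.closedBall (0 : V) ρ) * ∫ ξ, ‖c ξ‖ ^ 2 := by
  set K := Metric.closedBall (0 : V) ρ with hK
  have hKc : IsCompact K := isCompact_closedBall _ _
  set v := volume.real K with hv
  have hv0 : 0 < v := by
    rw [hv, measureReal_def]
    exact ENNReal.toReal_pos (Metric.measure_closedBall_pos _ _ hρ).ne' hKc.measure_lt_top.ne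
  set I := ∫ ξ in K, ‖c ξ‖ with hI
  have hc1 : IntegrableOn (fun ξ => ‖c ξ‖) K := c.continuous.norm.continuousOn.integrableOn_compact hKc
  have hc2 : IntegrableOn (fun ξ => ‖c ξ‖ ^ 2) K :=
    (c.continuous.norm.pow 2).continuousOn.integrableOn_compact hKc
  have hc3 : Integrable (fun ξ => ‖c ξ‖ ^ 2) := (c.memLp 2).integrable_norm_pow (by norm_num)
  have h0 : 0 ≤ ∫ ξ in K, (v * ‖c ξ‖ - I) ^ 2 := integral_nonneg fun _ => sq_nonneg _
  have h1 : ∫ ξ in K, (v * ‖c ξ‖ - I) ^ 2 =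
      v ^ 2 * (∫ ξ in K, ‖c ξ‖ ^ 2) - 2 * v * I * I + v * I ^ 2 := by
    have : ∀ ξ, (v * ‖c ξ‖ - I) ^ 2 = v ^ 2 * ‖c ξ‖ ^ 2 - 2 * v * I * ‖c ξ‖ + I ^ 2 := by
      intro ξ; ring
    simp_rw [this]
    rw [integral_add, integral_sub, integral_const_mul, integral_const_mul, setIntegral_const]
    · rw [smul_eq_mul]
    · exact hc2.const_mul _
    · exact hc1.const_mul _
    · exact (hc2.const_mul _).sub (hc1.const_mul _)
    · exact integrableOn_const hKc.measure_lt_top.ne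
  have h2 : ∫ ξ in K, ‖c ξ‖ ^ 2 ≤ ∫ ξ, ‖c ξ‖ ^ 2 :=
    setIntegral_le_integral hc3 (Filter.Eventually.of_forall fun _ => by positivity)
  have h3 : I ^ 2 ≤ v * ∫ ξ in K, ‖c ξ‖ ^ 2 := by
    rw [h1] at h0
    have : 0 ≤ v * (v * (∫ ξ in K, ‖c ξ‖ ^ 2) - I ^ 2) := by linarith
    have := nonneg_of_mul_nonneg_right this hv0
    linarith
  exact h3.trans (by gcongr)

open scoped FourierTransform in
theorem aux_band {V : Type*} [NormedAddCommGroup V] [InnerProductSpace ℝ V]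
    [FiniteDimensional ℝ V] [MeasurableSpace V] [BorelSpace V] (ρ : ℝ) (hρ : 0 < ρ)
    (Q : Set V) (hQ : IsCompact Q) (ε : ℝ) (hε : 0 < ε) (δ : ℝ) (hδ : 0 < δ) :
    ∃ C : ℝ, 0 < C ∧ ∀ c : SchwartzMap V ℂ, (∀ ξ, ρ < ‖ξ‖ → c ξ = 0) →
      ∀ E : Set V, E ⊆ Q → MeasurableSet E → ENNReal.ofReal ε ≤ volume E →
      ∫ x in Q, ‖𝓕 c x‖ ^ 2 ≤ C * (∫ x in E, ‖𝓕 c x‖ ^ 2) + δ * ∫ ξ, ‖c ξ‖ ^ 2 := by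
  set K := Metric.closedBall (0 : V) ρ with hK
  have hKc : IsCompact K := isCompact_closedBall _ _
  have hKm : MeasurableSet K := hKc.measurableSet
  have hfin : IsFiniteMeasure (Measure.comap ((↑) : K → V) volume) := by
    constructor
    rw [(MeasurableEmbedding.subtype_coe hKm).comap_apply]
    exact (measure_mono (by simp)).trans_lt hKc.measure_lt_top
  obtain ⟨k, hkc, hka, hkv⟩ := aux_kernel (V := V) ρ
  set v := volume.real K with hv
  have hv0 : 0 ≤ v := measureReal_nonneg
  obtain ⟨C, hC, H⟩ := aux_compact k hkc hka Q hQ ε hε (δ / (v + 1)) (by positivity)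
  refine ⟨C, hC, fun c hc E hE hEm hEv => ?_⟩
  have hint : ∀ a : C(K, ℂ), Integrable (fun ξ : K => a ξ * c ξ)
      (Measure.comap ((↑) : K → V) volume) := by
    intro a
    have hcont : Continuous fun ξ : K => a ξ * c ξ :=
      a.continuous.mul (c.continuous.comp continuous_subtype_val)
    exact hcont.integrable_of_hasCompactSupport (HasCompactSupport.of_compactSpace _)
  let ψ₀ : C(K, ℂ) →ₗ[ℂ] ℂ :=
    { toFun := fun a => ∫ ξ : K, a ξ * c ξ ∂(Measure.comap ((↑) : K → V) volume)
      map_add' := fun a b => by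
        rw [← integral_add (hint a) (hint b)]
        simp [add_mul]
      map_smul' := fun z a => by
        simp [mul_assoc, integral_const_mul] }
  set I := ∫ ξ in K, ‖c ξ‖ with hI
  have hI0 : 0 ≤ I := integral_nonneg fun _ => norm_nonneg _
  have hcn : Integrable (fun ξ : K => ‖c ξ‖) (Measure.comap ((↑) : K → V) volume) :=
    (c.continuous.comp continuous_subtype_val).norm.integrable_of_hasCompactSupport
      (HasCompactSupport.of_compactSpace _)
  have hb : ∀ a, ‖ψ₀ a‖ ≤ I * ‖a‖ := by
    intro a
    have e : I = ∫ ξ : K, ‖c ξ‖ ∂(Measure.comap ((↑) : K → V) volume) :=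
      (integral_subtype_comap hKm (fun ξ => ‖c ξ‖)).symm
    rw [e, mul_comm, ← integral_const_mul]
    refine norm_integral_le_of_norm_le (hcn.const_mul _) (Filter.Eventually.of_forall fun ξ => ?_)
    rw [norm_mul]
    gcongr
    exact a.norm_coe_le_norm ξ
  let ψ : C(K, ℂ) →L[ℂ] ℂ := ψ₀.mkContinuous I hb
  have hψn : ‖ψ‖ ≤ I := ψ₀.mkContinuous_norm_le hI0 hb
  have hψ : ∀ x, ψ (k x) = 𝓕 c x := by
    intro x
    have e1 : ψ (k x) = ∫ ξ : K, k x ξ * c ξ ∂(Measure.comap ((↑) : K → V) volume) := rfl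
    simp_rw [e1, hkv]
    rw [integral_subtype_comap hKm (fun ξ : V =>
      Complex.exp (((-2 * π * inner ℝ ξ x : ℝ) : ℂ) * Complex.I) * c ξ),
      SchwartzMap.fourier_coe, Real.fourier_eq']
    rw [setIntegral_eq_integral_of_forall_compl_eq_zero]
    · simp
    · intro ξ hξ
      rw [hc ξ (by simpa [hK] using hξ), mul_zero]
  have h := H ψ E hE hEm hEv
  simp_rw [hψ] at h
  refine h.trans ?_
  have h1 : ‖ψ‖ ^ 2 ≤ v * ∫ ξ, ‖c ξ‖ ^ 2 :=
    le_trans (by gcongr) (aux_cs ρ hρ c)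
  have h2 : 0 ≤ ∫ ξ, ‖c ξ‖ ^ 2 := integral_nonneg fun _ => by positivity
  have h3 : δ / (v + 1) * ‖ψ‖ ^ 2 ≤ δ * ∫ ξ, ‖c ξ‖ ^ 2 := by
    rw [div_mul_eq_mul_div, div_le_iff₀ (by positivity), mul_assoc]
    refine mul_le_mul_of_nonneg_left ?_ hδ.le
    nlinarith
  linarith

open scoped FourierTransform in
theorem aux_window {V : Type*} [NormedAddCommGroup V] [InnerProductSpace ℝ V]
    [FiniteDimensional ℝ V] [MeasurableSpace V] [BorelSpace V] (Q : Set V) (hQ : IsCompact Q) :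
    ∃ b : SchwartzMap V ℂ, ∃ r m : ℝ, 0 < r ∧ 0 < m ∧ (∀ ξ, r < ‖ξ‖ → b ξ = 0) ∧
      ∀ x ∈ Q, m ≤ ‖𝓕 b x‖ := by
  obtain ⟨B, hB⟩ := hQ.isBounded.exists_norm_le
  set B' := |B| + 1 with hB'
  have hB0 : 0 < B' := by positivity
  set r := 1 / (2 * π * B') with hr
  have hr0 : 0 < r := by positivity
  let g : ContDiffBump (0 : V) := ⟨r / 2, r, by positivity, by linarith⟩
  have hgs : HasCompactSupport (fun ξ => ((g ξ : ℝ) : ℂ)) :=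
    g.hasCompactSupport.comp_left (g := fun t : ℝ => (t : ℂ)) (by simp)
  have hgc : ContDiff ℝ ((⊤ : ℕ∞) : WithTop ℕ∞) (fun ξ => ((g ξ : ℝ) : ℂ)) :=
    Complex.ofRealCLM.contDiff.comp g.contDiff
  have hg0 : ∀ ξ, r < ‖ξ‖ → g ξ = 0 := fun ξ hξ =>
    g.zero_of_le_dist (by rw [dist_zero_right]; exact hξ.le)
  have hgi : Integrable (fun ξ => g ξ) :=
    g.continuous.integrable_of_hasCompactSupport g.hasCompactSupport
  refine ⟨hgs.toSchwartzMap hgc, r, (1 / 2) * ∫ ξ, g ξ, hr0, ?_, ?_, ?_⟩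
  · have := g.integral_pos (μ := (volume : Measure V)); positivity
  · intro ξ hξ
    simp [hg0 ξ hξ]
  · intro x hx
    have hxB : ‖x‖ ≤ B' := (hB x hx).trans ((le_abs_self B).trans (by linarith))
    have e1 : (𝓕 (hgs.toSchwartzMap hgc) x).re =
        ∫ ξ, g ξ * Real.cos (2 * π * inner ℝ ξ x) := by
      have hi : Integrable (fun ξ : V => Complex.exp (((-2 * π * inner ℝ ξ x : ℝ) : ℂ) * Complex.I)
          • ((g ξ : ℝ) : ℂ)) := by
        have hc1 : Continuous (fun ξ : V =>
            Complex.exp (((-2 * π * inner ℝ ξ x : ℝ) : ℂ) * Complex.I)) := by fun_prop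
        have hc2 : Continuous (fun ξ : V => ((g ξ : ℝ) : ℂ)) :=
          Complex.continuous_ofReal.comp g.continuous
        exact (hc1.smul hc2).integrable_of_hasCompactSupport hgs.smul_left
      rw [SchwartzMap.fourier_coe, Real.fourier_eq']
      simp only [HasCompactSupport.toSchwartzMap_toFun] at *
      have := Complex.reCLM.integral_comp_comm hi
      simp only [Complex.reCLM_apply] at this
      erw [← this]
      congr 1
      ext ξ
      rw [smul_eq_mul, mul_comm, Complex.re_ofReal_mul, Complex.exp_ofReal_mul_I_re]
      congr 1
      rw [← Real.cos_neg]; congr 1; ring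
    have e2 : (1 / 2) * ∫ ξ, g ξ ≤ ∫ ξ, g ξ * Real.cos (2 * π * inner ℝ ξ x) := by
      rw [← integral_const_mul]
      refine integral_mono (hgi.const_mul _) ?_ fun ξ => ?_
      · exact (g.continuous.mul (by fun_prop)).integrable_of_hasCompactSupport
          g.hasCompactSupport.mul_right
      · by_cases hξ : r < ‖ξ‖
        · simp [hg0 ξ hξ]
        · have h1 : |2 * π * inner ℝ ξ x| ≤ 1 := by
            rw [abs_mul, abs_of_pos (by positivity : (0:ℝ) < 2 * π)]
            calc 2 * π * |inner ℝ ξ x| ≤ 2 * π * (‖ξ‖ * ‖x‖) := by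
                  gcongr; exact abs_real_inner_le_norm ξ x
              _ ≤ 2 * π * (r * B') := by
                  gcongr; exact not_lt.1 hξ
              _ = 1 := by rw [hr]; field_simp
          have h2 := Real.one_sub_sq_div_two_le_cos (x := 2 * π * inner ℝ ξ x)
          have h3 : (2 * π * inner ℝ ξ x) ^ 2 ≤ 1 := by
            rw [← sq_abs]; exact pow_le_one₀ (abs_nonneg _) h1
          have h4 : 0 ≤ g ξ := g.nonneg
          have h5 : 1 / 2 ≤ Real.cos (2 * π * inner ℝ ξ x) := by linarith
          show 1 / 2 * g ξ ≤ g ξ * Real.cos (2 * π * inner ℝ ξ x)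
          rw [mul_comm]; gcongr
    calc _ ≤ _ := e2
      _ = _ := e1.symm
      _ ≤ _ := Complex.re_le_norm _

open scoped FourierTransform in
theorem aux_local {V : Type*} [NormedAddCommGroup V] [InnerProductSpace ℝ V]
    [FiniteDimensional ℝ V] [MeasurableSpace V] [BorelSpace V] (R : ℝ) (hR : 0 < R)
    (Q : Set V) (hQ : IsCompact Q) (ε : ℝ) (hε : 0 < ε) :
    ∃ η : SchwartzMap V ℂ, ∀ δ : ℝ, 0 < δ →
    ∃ C : ℝ, 0 < C ∧ ∀ f : SchwartzMap V ℂ, (∀ ξ, R < ‖ξ‖ → 𝓕 f ξ = 0) →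
      ∀ E : Set V, E ⊆ Q → MeasurableSet E → ENNReal.ofReal ε ≤ volume E →
      ∫ x in Q, ‖f x‖ ^ 2 ≤ C * (∫ x in E, ‖f x‖ ^ 2) + δ * ∫ x, ‖η x‖ ^ 2 * ‖f x‖ ^ 2 := by
  obtain ⟨b, r, m, hr, hm, hb, hbm⟩ := aux_window Q hQ
  refine ⟨𝓕 b, fun δ hδ => ?_⟩
  obtain ⟨C, hC, H⟩ := aux_band (R + r) (by positivity) Q hQ ε hε (δ * m ^ 2) (by positivity)
  obtain ⟨M, hM0, hM⟩ : ∃ M : ℝ, 0 < M ∧ ∀ x, ‖𝓕 b x‖ ≤ M := by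
    obtain ⟨M, h1, h2⟩ := (𝓕 b).decay 0 0
    exact ⟨M, h1, fun x => by simpa using h2 x⟩
  refine ⟨C * M ^ 2 / m ^ 2, by positivity, fun f hf E hE hEm hEv => ?_⟩
  have hfi : ∀ ξ, R < ‖ξ‖ → (𝓕⁻ f) ξ = 0 := by
    intro ξ hξ
    rw [SchwartzMap.fourierInv_coe, Real.fourierInv_eq_fourier_neg]
    exact hf (-ξ) (by simpa using hξ)
  let c : SchwartzMap V ℂ := SchwartzMap.convolution (ContinuousLinearMap.mul ℂ ℂ) (𝓕⁻ f) b
  have hFc : ∀ x, 𝓕 c x = f x * 𝓕 b x := by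
    intro x
    simp [c, SchwartzMap.fourier_convolution]
  have hc : ∀ ξ, R + r < ‖ξ‖ → c ξ = 0 := by
    intro ξ hξ
    simp only [c]
    rw [SchwartzMap.convolution_apply, convolution_def]
    refine integral_eq_zero_of_ae (Filter.Eventually.of_forall fun t => ?_)
    by_cases ht : R < ‖t‖
    · simp [hfi t ht]
    · have : r < ‖ξ - t‖ := by
        have := norm_sub_norm_le ξ t
        linarith [not_lt.1 ht]
      simp [hb _ this]
  have h := H c hc E hE hEm hEv
  rw [← SchwartzMap.integral_norm_sq_fourier c] at h
  simp_rw [hFc, norm_mul, mul_pow] at h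
  have hi : Integrable (fun x => ‖f x‖ ^ 2) := (f.memLp 2).integrable_norm_pow (by norm_num)
  have hi2 : Integrable (fun x => ‖f x‖ ^ 2 * ‖𝓕 b x‖ ^ 2) := by
    refine (hi.mul_const (M ^ 2)).mono'
      ((f.continuous.norm.pow 2).mul ((𝓕 b).continuous.norm.pow 2)).aestronglyMeasurable
      (Filter.Eventually.of_forall fun x => ?_)
    rw [Real.norm_of_nonneg (by positivity)]
    gcongr
    exact hM x
  have h1 : m ^ 2 * ∫ x in Q, ‖f x‖ ^ 2 ≤ ∫ x in Q, ‖f x‖ ^ 2 * ‖𝓕 b x‖ ^ 2 := by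
    rw [← integral_const_mul]
    refine setIntegral_mono_on (hi.integrableOn.const_mul _) hi2.integrableOn hQ.measurableSet
      fun x hx => ?_
    rw [mul_comm]
    gcongr
    exact hbm x hx
  have h2 : ∫ x in E, ‖f x‖ ^ 2 * ‖𝓕 b x‖ ^ 2 ≤ M ^ 2 * ∫ x in E, ‖f x‖ ^ 2 := by
    rw [← integral_const_mul]
    refine integral_mono hi2.integrableOn (hi.integrableOn.const_mul _) fun x => ?_
    show ‖f x‖ ^ 2 * ‖𝓕 b x‖ ^ 2 ≤ M ^ 2 * ‖f x‖ ^ 2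
    rw [mul_comm]
    gcongr
    exact hM x
  have h3 : ∫ x, ‖𝓕 b x‖ ^ 2 * ‖f x‖ ^ 2 = ∫ x, ‖f x‖ ^ 2 * ‖𝓕 b x‖ ^ 2 := by
    simp_rw [mul_comm]
  rw [h3]
  have h4 : m ^ 2 * ∫ x in Q, ‖f x‖ ^ 2 ≤ C * (M ^ 2 * ∫ x in E, ‖f x‖ ^ 2) +
      δ * m ^ 2 * ∫ x, ‖f x‖ ^ 2 * ‖𝓕 b x‖ ^ 2 :=
    h1.trans (h.trans (by gcongr))
  have hm2 : 0 < m ^ 2 := by positivity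
  refine le_of_mul_le_mul_left (h4.trans (le_of_eq ?_)) hm2
  field_simp

theorem aux_conv {V : Type*} [NormedAddCommGroup V] [InnerProductSpace ℝ V]
    [FiniteDimensional ℝ V] [MeasurableSpace V] [BorelSpace V] (w G : V → ℝ)
    (hw : Integrable w) (hG : Integrable G) :
    Integrable (fun k => ∫ x, w x * G (x + k)) ∧
      ∫ k, ∫ x, w x * G (x + k) = (∫ x, w x) * ∫ x, G x := by
  have hw' : Integrable (fun x => w (-x)) := hw.comp_neg
  have e : (fun k => ∫ x, w x * G (x + k)) =
      convolution (fun x => w (-x)) G (ContinuousLinearMap.mul ℝ ℝ) volume := by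
    ext k
    rw [convolution_def, ← integral_neg_eq_self]
    simp only [ContinuousLinearMap.mul_apply', neg_add_eq_sub]
  rw [e]
  refine ⟨hw'.integrable_convolution _ hG, ?_⟩
  rw [integral_convolution _ hw' hG, integral_neg_eq_self]
  rfl

open scoped FourierTransform in
theorem aux_LS {V : Type*} [NormedAddCommGroup V] [InnerProductSpace ℝ V]
    [FiniteDimensional ℝ V] [MeasurableSpace V] [BorelSpace V] (R : ℝ) (hR : 0 < R)
    (Q : Set V) (hQ : IsCompact Q) (ε : ℝ) (hε : 0 < ε) (ω : Set V) (hω : MeasurableSet ω)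
    (hthick : ∀ k : V, ENNReal.ofReal ε ≤ volume (Q ∩ {x | x + k ∈ ω})) :
    ∃ C : ℝ, 0 < C ∧ ∀ f : SchwartzMap V ℂ, (∀ ξ, R < ‖ξ‖ → 𝓕 f ξ = 0) →
      ∫ x, ‖f x‖ ^ 2 ≤ C * ∫ x in ω, ‖f x‖ ^ 2 := by
  obtain ⟨η, hη⟩ := aux_local R hR Q hQ ε hε
  set q := volume.real Q with hq
  have hq0 : 0 < q := by
    rw [hq, measureReal_def]
    refine ENNReal.toReal_pos ?_ hQ.measure_lt_top.ne
    have h1 : 0 < ENNReal.ofReal ε := by simpa using hε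
    exact (h1.trans_le ((hthick 0).trans (measure_mono Set.inter_subset_left))).ne'
  have hηi : Integrable (fun x => ‖η x‖ ^ 2) := (η.memLp 2).integrable_norm_pow (by norm_num)
  set n := ∫ x, ‖η x‖ ^ 2 with hn
  have hn0 : 0 ≤ n := integral_nonneg fun _ => by positivity
  obtain ⟨C, hC, H⟩ := hη (q / (2 * (n + 1))) (by positivity)
  refine ⟨2 * C, by positivity, fun f hf => ?_⟩
  have hi : Integrable (fun x => ‖f x‖ ^ 2) := (f.memLp 2).integrable_norm_pow (by norm_num)
  have hiω : Integrable (ω.indicator fun x => ‖f x‖ ^ 2) := hi.indicator hω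
  have hQi : Integrable (Q.indicator (fun _ => (1 : ℝ))) :=
    (integrable_indicator_iff hQ.measurableSet).2 (integrableOn_const hQ.measure_lt_top.ne)
  have hQv : ∫ x, Q.indicator (fun _ => (1 : ℝ)) x = q := by
    rw [integral_indicator hQ.measurableSet, setIntegral_const]; simp [hq]
  obtain ⟨a1, a2⟩ := aux_conv _ _ hQi hi
  obtain ⟨b1, b2⟩ := aux_conv _ _ hQi hiω
  obtain ⟨c1, c2⟩ := aux_conv _ _ hηi hi
  have hpt : ∀ k : V, ∫ x, Q.indicator (fun _ => (1 : ℝ)) x * ‖f (x + k)‖ ^ 2 ≤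
      C * (∫ x, Q.indicator (fun _ => (1 : ℝ)) x * (ω.indicator (fun x => ‖f x‖ ^ 2)) (x + k)) +
      q / (2 * (n + 1)) * ∫ x, ‖η x‖ ^ 2 * ‖f (x + k)‖ ^ 2 := by
    intro k
    let fk : SchwartzMap V ℂ := f.compSubConstCLM ℂ (-k)
    have hfk : ∀ x, fk x = f (x + k) := fun x => by simp [fk]
    have hEm : MeasurableSet {x | x + k ∈ ω} := hω.preimage (measurable_add_const k)
    have hfk2 : ∀ ξ, R < ‖ξ‖ → 𝓕 fk ξ = 0 := by
      intro ξ hξ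
      have h0 := hf ξ hξ
      rw [SchwartzMap.fourier_coe] at h0 ⊢
      have e1 : (fk : V → ℂ) = f ∘ fun x => x + k := by ext x; exact hfk x
      rw [e1]
      have e2 := congrFun (VectorFourier.fourierIntegral_comp_add_right Real.fourierChar
        (volume : Measure V) (innerₗ V) (f : V → ℂ) k) ξ
      refine e2.trans ?_
      have e3 : VectorFourier.fourierIntegral Real.fourierChar (volume : Measure V) (innerₗ V)
        (f : V → ℂ) ξ = 0 := h0
      rw [e3, smul_zero]
    have h := H fk hfk2 (Q ∩ {x | x + k ∈ ω}) Set.inter_subset_left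
      (hQ.measurableSet.inter hEm) (hthick k)
    simp_rw [hfk] at h
    have e1 : ∫ x, Q.indicator (fun _ => (1 : ℝ)) x * ‖f (x + k)‖ ^ 2 =
        ∫ x in Q, ‖f (x + k)‖ ^ 2 := by
      rw [← integral_indicator hQ.measurableSet]
      congr 1; ext x
      by_cases hx : x ∈ Q <;> simp [hx]
    have e2 : ∫ x, Q.indicator (fun _ => (1 : ℝ)) x *
        (ω.indicator (fun x => ‖f x‖ ^ 2)) (x + k) =
        ∫ x in Q ∩ {x | x + k ∈ ω}, ‖f (x + k)‖ ^ 2 := by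
      rw [← integral_indicator (hQ.measurableSet.inter hEm)]
      congr 1; ext x
      by_cases hx : x ∈ Q <;> by_cases hx2 : x + k ∈ ω <;> simp [hx, hx2]
    rw [e1, e2]
    exact h
  have h := integral_mono a1 ((b1.const_mul C).add (c1.const_mul (q / (2 * (n + 1))))) hpt
  simp only [Pi.add_apply] at h
  rw [a2, integral_add (b1.const_mul C) (c1.const_mul _), integral_const_mul, integral_const_mul,
    b2, c2, hQv, integral_indicator hω, ← hn] at h
  set A := ∫ x, ‖f x‖ ^ 2 with hA
  have hA0 : 0 ≤ A := integral_nonneg fun _ => by positivity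
  set D := ∫ x in ω, ‖f x‖ ^ 2
  have h5 : q / (2 * (n + 1)) * (n * A) ≤ q / 2 * A := by
    rw [div_mul_eq_mul_div, div_le_iff₀ (by positivity)]
    nlinarith [mul_nonneg hq0.le hA0]
  have h6 : q * A ≤ q * (2 * C * D) := by nlinarith
  exact le_of_mul_le_mul_left h6 hq0

theorem aux_int {V : Type*} [NormedAddCommGroup V] [InnerProductSpace ℝ V]
    [FiniteDimensional ℝ V] [MeasurableSpace V] [BorelSpace V] (s : ℝ) (hs : s ∈ Set.Ioo (0:ℝ) 1)
    (lam : ℂ) (g : SchwartzMap V ℂ) :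
    Integrable (fun ξ : V => ‖(lam + ((2 * π * ‖ξ‖) ^ s : ℝ)) * g ξ‖ ^ 2) := by
  have hc : Continuous (fun ξ : V => (2 * π * ‖ξ‖) ^ s) :=
    Continuous.rpow_const (by fun_prop) fun _ => Or.inr hs.1.le
  have hm : AEStronglyMeasurable (fun ξ : V => (lam + ((2 * π * ‖ξ‖) ^ s : ℝ)) * g ξ) volume :=
    ((continuous_const.add (Complex.continuous_ofReal.comp hc)).mul
      g.continuous).aestronglyMeasurable
  obtain ⟨K, hK⟩ := g.decay 1 0
  obtain ⟨K0, hK0⟩ := g.decay 0 0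
  have hb : ∀ ξ : V, ‖(lam + ((2 * π * ‖ξ‖) ^ s : ℝ)) * g ξ‖ ≤
      (‖lam‖ + 1) * K0 + 2 * π * K := by
    intro ξ
    have h1 := hK.2 ξ
    have h0 := hK0.2 ξ
    simp only [pow_one, pow_zero, one_mul, norm_iteratedFDeriv_zero] at h1 h0
    have h2 : (2 * π * ‖ξ‖) ^ s ≤ 1 + 2 * π * ‖ξ‖ := by
      have hp : 0 ≤ 2 * π * ‖ξ‖ := by positivity
      calc (2 * π * ‖ξ‖) ^ s ≤ (1 + 2 * π * ‖ξ‖) ^ s :=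
            Real.rpow_le_rpow hp (by linarith) hs.1.le
        _ ≤ (1 + 2 * π * ‖ξ‖) ^ (1:ℝ) :=
            Real.rpow_le_rpow_of_exponent_le (by linarith) hs.2.le
        _ = _ := Real.rpow_one _
    have h3 : ‖lam + ((2 * π * ‖ξ‖) ^ s : ℝ)‖ ≤ ‖lam‖ + (1 + 2 * π * ‖ξ‖) := by
      refine (norm_add_le _ _).trans ?_
      rw [Complex.norm_real, Real.norm_of_nonneg (by positivity)]
      linarith
    rw [norm_mul]
    calc _ ≤ (‖lam‖ + (1 + 2 * π * ‖ξ‖)) * ‖g ξ‖ := by gcongr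
      _ = (‖lam‖ + 1) * ‖g ξ‖ + 2 * π * (‖ξ‖ * ‖g ξ‖) := by ring
      _ ≤ _ := by gcongr
  have hi : Integrable (fun ξ : V => (lam + ((2 * π * ‖ξ‖) ^ s : ℝ)) * g ξ) := by
    have e1 := g.integrable_pow_mul volume 1
    have e0 := g.integrable_pow_mul volume 0
    refine Integrable.mono' ((e0.const_mul (‖lam‖ + 1)).add (e1.const_mul (2 * π))) hm
      (Filter.Eventually.of_forall fun ξ => ?_)
    have h2 : (2 * π * ‖ξ‖) ^ s ≤ 1 + 2 * π * ‖ξ‖ := by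
      have hp : 0 ≤ 2 * π * ‖ξ‖ := by positivity
      calc (2 * π * ‖ξ‖) ^ s ≤ (1 + 2 * π * ‖ξ‖) ^ s :=
            Real.rpow_le_rpow hp (by linarith) hs.1.le
        _ ≤ (1 + 2 * π * ‖ξ‖) ^ (1:ℝ) :=
            Real.rpow_le_rpow_of_exponent_le (by linarith) hs.2.le
        _ = _ := Real.rpow_one _
    have h3 : ‖lam + ((2 * π * ‖ξ‖) ^ s : ℝ)‖ ≤ ‖lam‖ + (1 + 2 * π * ‖ξ‖) := by
      refine (norm_add_le _ _).trans ?_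
      rw [Complex.norm_real, Real.norm_of_nonneg (by positivity)]
      linarith
    rw [norm_mul]
    calc _ ≤ (‖lam‖ + (1 + 2 * π * ‖ξ‖)) * ‖g ξ‖ := by gcongr
      _ = _ := by simp; ring
  refine Integrable.mono' (hi.norm.const_mul ((‖lam‖ + 1) * K0 + 2 * π * K)) (hm.norm.pow 2)
    (Filter.Eventually.of_forall fun ξ => ?_)
  rw [Real.norm_of_nonneg (by positivity), sq]
  have := hb ξ
  gcongr

theorem aux_sq (a b : ℂ) : ‖a‖ ^ 2 ≤ 2 * ‖b‖ ^ 2 + 2 * ‖a - b‖ ^ 2 := by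
  have h : ‖a‖ ≤ ‖b‖ + ‖a - b‖ := by
    calc ‖a‖ = ‖b + (a - b)‖ := by ring_nf
      _ ≤ _ := norm_add_le _ _
  nlinarith [norm_nonneg a, norm_nonneg b, norm_nonneg (a - b), sq_nonneg (‖b‖ - ‖a - b‖)]

open scoped FourierTransform in
theorem aux_split {V : Type*} [NormedAddCommGroup V] [InnerProductSpace ℝ V]
    [FiniteDimensional ℝ V] [MeasurableSpace V] [BorelSpace V] (R : ℝ) (hR : 0 < R)
    (φ : SchwartzMap V ℂ) : ∃ f : SchwartzMap V ℂ, (∀ ξ, 2 * R < ‖ξ‖ → 𝓕 f ξ = 0) ∧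
      ∀ ξ, ‖𝓕 (φ - f) ξ‖ ≤ ‖𝓕 φ ξ‖ ∧ (‖ξ‖ ≤ R → 𝓕 (φ - f) ξ = 0) := by
  let g : ContDiffBump (0 : V) := ⟨R, 2 * R, by positivity, by linarith⟩
  have hgs : HasCompactSupport (fun ξ => ((g ξ : ℝ) : ℂ)) :=
    g.hasCompactSupport.comp_left (g := fun t : ℝ => (t : ℂ)) (by simp)
  have hgc : ContDiff ℝ ((⊤ : ℕ∞) : WithTop ℕ∞) (fun ξ => ((g ξ : ℝ) : ℂ)) :=
    Complex.ofRealCLM.contDiff.comp g.contDiff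
  have ht : (fun ξ => ((g ξ : ℝ) : ℂ)).HasTemperateGrowth :=
    (hgs.toSchwartzMap hgc).hasTemperateGrowth
  set h : SchwartzMap V ℂ := SchwartzMap.smulLeftCLM ℂ (fun ξ => ((g ξ : ℝ) : ℂ)) (𝓕 φ) with hh
  have hhv : ∀ ξ, h ξ = (g ξ : ℂ) * 𝓕 φ ξ := fun ξ => by
    rw [hh, SchwartzMap.smulLeftCLM_apply_apply ht]; rfl
  have hF : 𝓕 (𝓕⁻ h) = h := FourierTransform.fourier_fourierInv_eq h
  have hF2 : ∀ ξ, 𝓕 (φ - 𝓕⁻ h) ξ = (1 - (g ξ : ℂ)) * 𝓕 φ ξ := fun ξ => by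
    have e : 𝓕 φ = 𝓕 (φ - 𝓕⁻ h) + 𝓕 (𝓕⁻ h) := by
      rw [← FourierTransform.fourier_add, sub_add_cancel]
    have e2 : 𝓕 φ ξ = 𝓕 (φ - 𝓕⁻ h) ξ + h ξ := by
      conv_lhs => rw [e]
      rw [SchwartzMap.add_apply, hF]
    rw [hhv] at e2
    linear_combination -e2
  refine ⟨𝓕⁻ h, fun ξ hξ => ?_, fun ξ => ⟨?_, fun hξ => ?_⟩⟩
  · rw [hF, hhv, g.zero_of_le_dist (by rw [dist_zero_right]; exact hξ.le)]; simp
  · rw [hF2, norm_mul]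
    have : ‖1 - (g ξ : ℂ)‖ ≤ 1 := by
      rw [← Complex.ofReal_one, ← Complex.ofReal_sub, Complex.norm_real, Real.norm_eq_abs, abs_le]
      constructor <;> linarith [g.nonneg (x := ξ), g.le_one (x := ξ)]
    exact mul_le_of_le_one_left (norm_nonneg _) this
  · rw [hF2, g.one_of_mem_closedBall (by simpa using hξ)]; simp

open scoped FourierTransform in
theorem aux_HESI {V : Type*} [NormedAddCommGroup V] [InnerProductSpace ℝ V]
    [FiniteDimensional ℝ V] [MeasurableSpace V] [BorelSpace V]
    (s : ℝ) (hs : s ∈ Set.Ioo (0:ℝ) 1)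
    (Q : Set V) (hQ : IsCompact Q) (ε : ℝ) (hε : 0 < ε) (ω : Set V) (hω : MeasurableSet ω)
    (hthick : ∀ k : V, ENNReal.ofReal ε ≤ volume (Q ∩ {x | x + k ∈ ω})) (β : ℝ) (hβ : 0 < β) :
    ∃ C : ℝ, 0 < C ∧ ∀ lam : ℂ, -β < lam.re → ∀ φ : SchwartzMap V ℂ,
      (lam.re + β) ^ 2 * (∫ x, ‖φ x‖ ^ 2) ≤
        C * ((∫ ξ, ‖(lam + ((2 * π * ‖ξ‖) ^ s : ℝ)) * 𝓕 φ ξ‖ ^ 2) + ∫ x in ω, ‖φ x‖ ^ 2) := by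
  set R := (β + 1) ^ (1 / s) / (2 * π) with hRdef
  have hs0 := hs.1
  have hR : 0 < R := by positivity
  have hRs : ∀ t, R ≤ t → β + 1 ≤ (2 * π * t) ^ s := by
    intro t ht
    have h1 : (β + 1) ^ (1 / s) ≤ 2 * π * t := by
      rw [hRdef, div_le_iff₀ (by positivity)] at ht; linarith
    calc β + 1 = ((β + 1) ^ (1 / s)) ^ s := by
          rw [← Real.rpow_mul (by positivity), one_div_mul_cancel hs0.ne', Real.rpow_one]
      _ ≤ _ := Real.rpow_le_rpow (by positivity) h1 hs0.le
  obtain ⟨C, hC, hLS⟩ := aux_LS (2 * R) (by positivity) Q hQ ε hε ω hω hthick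
  refine ⟨(1 + β) ^ 2 * (4 * C + 2), by positivity, fun lam hlam φ => ?_⟩
  have hre : ∀ ξ : V, lam.re + (2 * π * ‖ξ‖) ^ s ≤ ‖lam + ((2 * π * ‖ξ‖) ^ s : ℝ)‖ := by
    intro ξ
    refine le_trans (le_of_eq ?_) (Complex.re_le_norm _)
    simp
  have hI := aux_int s hs lam (𝓕 φ)
  have hsq : ∀ f : SchwartzMap V ℂ, Integrable (fun x => ‖f x‖ ^ 2) := fun f =>
    (f.memLp 2).integrable_norm_pow (by norm_num)
  set J := ∫ ξ, ‖(lam + ((2 * π * ‖ξ‖) ^ s : ℝ)) * 𝓕 φ ξ‖ ^ 2 with hJ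
  have hJ0 : 0 ≤ J := integral_nonneg fun _ => by positivity
  have hW0 : 0 ≤ ∫ x in ω, ‖φ x‖ ^ 2 := integral_nonneg fun _ => by positivity
  set W := ∫ x in ω, ‖φ x‖ ^ 2
  have hP0 : 0 ≤ ∫ x, ‖φ x‖ ^ 2 := integral_nonneg fun _ => by positivity
  rcases le_or_gt 1 lam.re with h1 | h1
  · have h2 : lam.re ^ 2 * (∫ x, ‖φ x‖ ^ 2) ≤ J := by
      rw [← SchwartzMap.integral_norm_sq_fourier, ← integral_const_mul]
      refine integral_mono ((hsq (𝓕 φ)).const_mul _) hI fun ξ => ?_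
      show lam.re ^ 2 * ‖𝓕 φ ξ‖ ^ 2 ≤ ‖(lam + ((2 * π * ‖ξ‖) ^ s : ℝ)) * 𝓕 φ ξ‖ ^ 2
      rw [norm_mul, mul_pow]
      have := hre ξ
      have h0 : 0 ≤ (2 * π * ‖ξ‖) ^ s := by positivity
      gcongr
      linarith
    have h3 : (lam.re + β) ^ 2 ≤ (1 + β) ^ 2 * lam.re ^ 2 := by
      rw [← mul_pow]
      have : lam.re + β ≤ (1 + β) * lam.re := by nlinarith
      have : 0 ≤ lam.re + β := by linarith
      gcongr
    calc _ ≤ (1 + β) ^ 2 * lam.re ^ 2 * (∫ x, ‖φ x‖ ^ 2) := by gcongr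
      _ = (1 + β) ^ 2 * (lam.re ^ 2 * (∫ x, ‖φ x‖ ^ 2)) := by ring
      _ ≤ (1 + β) ^ 2 * J := by gcongr
      _ ≤ (1 + β) ^ 2 * ((4 * C + 2) * (J + W)) := by
          gcongr
          nlinarith [mul_nonneg hC.le hJ0, mul_nonneg hC.le hW0]
      _ = _ := by ring
  · obtain ⟨f, hf1, hf2⟩ := aux_split R hR φ
    have hr : (∫ x, ‖(φ - f) x‖ ^ 2) ≤ J := by
      rw [← SchwartzMap.integral_norm_sq_fourier]
      refine integral_mono (hsq (𝓕 (φ - f))) hI fun ξ => ?_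
      show ‖𝓕 (φ - f) ξ‖ ^ 2 ≤ ‖(lam + ((2 * π * ‖ξ‖) ^ s : ℝ)) * 𝓕 φ ξ‖ ^ 2
      rcases le_or_gt ‖ξ‖ R with h | h
      · rw [(hf2 ξ).2 h]; simp; positivity
      · have h5 := hRs _ h.le
        have h6 := hre ξ
        have h7 := (hf2 ξ).1
        rw [norm_mul]
        gcongr
        refine h7.trans (le_mul_of_one_le_left (norm_nonneg _) (by linarith))
    have hfL := hLS f hf1
    have a1 : (∫ x, ‖φ x‖ ^ 2) ≤ 2 * (∫ x, ‖f x‖ ^ 2) + 2 * (∫ x, ‖(φ - f) x‖ ^ 2) := by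
      rw [← integral_const_mul, ← integral_const_mul,
        ← integral_add ((hsq f).const_mul _) ((hsq (φ - f)).const_mul _)]
      exact integral_mono (hsq φ) (((hsq f).const_mul _).add ((hsq (φ - f)).const_mul _))
        fun x => aux_sq (φ x) (f x)
    have a2 : (∫ x in ω, ‖f x‖ ^ 2) ≤ 2 * W + 2 * (∫ x in ω, ‖(φ - f) x‖ ^ 2) := by
      rw [← integral_const_mul, ← integral_const_mul,
        ← integral_add ((hsq φ).const_mul _).integrableOn ((hsq (φ - f)).const_mul _).integrableOn]
      refine integral_mono (hsq f).integrableOn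
        (((hsq φ).const_mul _).add ((hsq (φ - f)).const_mul _)).integrableOn
        fun x => ?_
      have := aux_sq (f x) (φ x)
      rw [norm_sub_rev] at this
      exact this
    have a3 : (∫ x in ω, ‖(φ - f) x‖ ^ 2) ≤ ∫ x, ‖(φ - f) x‖ ^ 2 :=
      setIntegral_le_integral (hsq _) (Filter.Eventually.of_forall fun _ => by positivity)
    have a4 : (∫ x, ‖φ x‖ ^ 2) ≤ (4 * C + 2) * (J + W) := by
      have a5 : (∫ x in ω, ‖f x‖ ^ 2) ≤ 2 * W + 2 * J := by linarith
      have a6 := mul_le_mul_of_nonneg_left a5 hC.le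
      nlinarith
    have h3 : (lam.re + β) ^ 2 ≤ (1 + β) ^ 2 := by
      have : 0 ≤ lam.re + β := by linarith
      gcongr
    calc _ ≤ (1 + β) ^ 2 * ((4 * C + 2) * (J + W)) := by gcongr
      _ = _ := by ring

/-- The sharp Hautus-type inequality (HESI) for the fractional heat equation controlled on
a thick set `ω ⊆ ℝ^N`: for every `β > 0` there is `C > 0` such that for all `λ` with
`Re λ > -β` and all Schwartz functions `φ`,
`(Re λ + β)² ∫|φ|² ≤ C (∫ |(λ + (2π|ξ|)^s) φ̂(ξ)|² dξ + ∫_ω |φ|²)`. -/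
theorem fractional_heat_HESI
    {N : ℕ} (hN : 0 < N) (s : ℝ) (hs : s ∈ Set.Ioo (0 : ℝ) 1)
    (ω : Set (Fin N → ℝ)) (hω : MeasurableSet ω)
    (hthick : ∃ ε : ℝ, 0 < ε ∧ ∃ L : ℝ, 0 < L ∧ ∀ x : Fin N → ℝ,
      ENNReal.ofReal (ε * L ^ N) ≤ volume (ω ∩ {y | ∀ i, |y i - x i| ≤ L / 2})) :
    ∀ β : ℝ, 0 < β → ∃ C : ℝ, 0 < C ∧
      ∀ lam : ℂ, -β < lam.re → ∀ φ : SchwartzMap (Fin N → ℝ) ℂ,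
        (lam.re + β) ^ 2 * ∫ x : Fin N → ℝ, ‖φ x‖ ^ 2
          ≤ C * ((∫ ξ : Fin N → ℝ,
              ‖(lam + ((2 * π * Real.sqrt (∑ i, ξ i ^ 2)) ^ s : ℝ)) *
                ∫ x : Fin N → ℝ, φ x *
                  Complex.exp (-(2 * π * Complex.I * ((∑ i, x i * ξ i : ℝ) : ℂ)))‖ ^ 2)
            + ∫ x in ω, ‖φ x‖ ^ 2) := by
  intro β hβ
  obtain ⟨ε, hε, L, hL, hth⟩ := hthick
  set e := PiLp.continuousLinearEquiv 2 ℝ (fun _ : Fin N => ℝ) with he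
  have hmp : MeasurePreserving (fun x : EuclideanSpace ℝ (Fin N) => (x.ofLp : Fin N → ℝ)) :=
    PiLp.volume_preserving_ofLp (Fin N)
  have hme : MeasurableEmbedding (fun x : EuclideanSpace ℝ (Fin N) => (x.ofLp : Fin N → ℝ)) :=
    (MeasurableEquiv.toLp 2 (Fin N → ℝ)).symm.measurableEmbedding
  have hcube : ∀ k : Fin N → ℝ, MeasurableSet {y : Fin N → ℝ | ∀ i, |y i - k i| ≤ L / 2} := by
    intro k
    refine IsClosed.measurableSet ?_
    simp only [Set.setOf_forall]
    exact isClosed_iInter fun i => isClosed_le (by fun_prop) continuous_const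
  have hQ : IsCompact (e ⁻¹' Metric.closedBall (0 : Fin N → ℝ) (L / 2)) :=
    e.toHomeomorph.isCompact_preimage.2 (isCompact_closedBall _ _)
  obtain ⟨C, hC, h⟩ := aux_HESI s hs (e ⁻¹' Metric.closedBall (0 : Fin N → ℝ) (L / 2)) hQ
    (ε * L ^ N) (by positivity) (e ⁻¹' ω) (e.continuous.measurable hω) (fun k => by
      refine (hth (e k)).trans (le_of_eq ?_)
      rw [← hmp.measure_preimage (hω.inter (hcube _)).nullMeasurableSet,
        ← measure_preimage_add_right volume k]
      congr 1
      ext x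
      simp only [Set.mem_preimage, Set.mem_inter_iff, Set.mem_setOf_eq, mem_closedBall_zero_iff]
      rw [pi_norm_le_iff_of_nonneg (by positivity), and_comm]
      simp [he, PiLp.coe_continuousLinearEquiv, Real.norm_eq_abs]) β hβ
  refine ⟨C, hC, fun lam hlam φ => ?_⟩
  have key := h lam hlam (SchwartzMap.compCLMOfContinuousLinearEquiv ℝ e φ)
  have e1 : (∫ x, ‖SchwartzMap.compCLMOfContinuousLinearEquiv ℝ e φ x‖ ^ 2) =
      ∫ x : Fin N → ℝ, ‖φ x‖ ^ 2 :=
    hmp.integral_comp hme (fun x => ‖φ x‖ ^ 2)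
  have e2 : (∫ x in e ⁻¹' ω, ‖SchwartzMap.compCLMOfContinuousLinearEquiv ℝ e φ x‖ ^ 2) =
      ∫ x in ω, ‖φ x‖ ^ 2 :=
    hmp.setIntegral_preimage_emb hme (fun x => ‖φ x‖ ^ 2) ω
  have e3 : ∀ ξ : EuclideanSpace ℝ (Fin N),
      FourierTransform.fourier (SchwartzMap.compCLMOfContinuousLinearEquiv ℝ e φ) ξ =
      ∫ x : Fin N → ℝ, φ x *
        Complex.exp (-(2 * π * Complex.I * ((∑ i, x i * ξ.ofLp i : ℝ) : ℂ))) := by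
    intro ξ
    rw [SchwartzMap.fourier_coe, Real.fourier_eq', ← hmp.integral_comp hme]
    congr 1
    ext x
    have hin : inner ℝ x ξ = ∑ i, x.ofLp i * ξ.ofLp i := by
      rw [PiLp.inner_apply]
      exact Finset.sum_congr rfl fun i _ => by simp [mul_comm]
    rw [smul_eq_mul, mul_comm, hin]
    refine congrArg₂ (· * ·) rfl (congrArg Complex.exp ?_)
    push_cast
    ring
  rw [e1, e2] at key
  refine key.trans (le_of_eq ?_)
  congr 2
  rw [← hmp.integral_comp hme]
  congr 1
  ext ξ
  rw [e3 ξ, EuclideanSpace.norm_eq]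
  simp only [Real.norm_eq_abs, sq_abs]
end

section
/- Let c > π², let n* := ⌊√c/π⌋, for each positive integer n set λ_n := c − n²π², and let x₀ ∈ (0,1) satisfy sin(nπx₀) ≠ 0 for every integer n with 1 ≤ n ≤ n*. Then for every β > 0 there exists C > 0 such that for every λ ∈ ℂ with Re λ > −β and every tuple (a₁,…,a_{n*}) of complex numbers, Σ_{n=1}^{n*} |a_n|² ≤ C·( Σ_{n=1}^{n*} |(λ − λ_n)·a_n|² + |Σ_{n=1}^{n*} a_n·√2·sin(nπx₀)|² ). -/
open Real Finset

theorem hautus_aux (S : Finset ℕ) (μ b : ℕ → ℝ)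
    (hμ : ∀ m ∈ S, ∀ n ∈ S, n ≠ m → 1 ≤ |μ n - μ m|) (hb : ∀ n ∈ S, b n ≠ 0) :
    ∃ C : ℝ, 0 < C ∧ ∀ (lam : ℂ) (a : ℕ → ℂ),
      ∑ n ∈ S, ‖a n‖ ^ 2 ≤ C * ((∑ n ∈ S, ‖(lam - (μ n : ℂ)) * a n‖ ^ 2)
        + ‖∑ n ∈ S, a n * (b n : ℂ)‖ ^ 2) := by
  have hB : 0 ≤ ∑ n ∈ S, (b n) ^ 2 := Finset.sum_nonneg fun _ _ => sq_nonneg _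
  have hK : 0 ≤ ∑ n ∈ S, ((b n) ^ 2)⁻¹ :=
    Finset.sum_nonneg fun _ _ => inv_nonneg.2 (sq_nonneg _)
  have hKm : ∀ m ∈ S, ((b m) ^ 2)⁻¹ ≤ ∑ n ∈ S, ((b n) ^ 2)⁻¹ := fun m hm =>
    Finset.single_le_sum (f := fun n => ((b n) ^ 2)⁻¹)
      (fun _ _ => inv_nonneg.2 (sq_nonneg _)) hm
  set B := ∑ n ∈ S, (b n) ^ 2 with hBdef
  set K := ∑ n ∈ S, ((b n) ^ 2)⁻¹ with hKdef
  refine ⟨4 + K * (2 + 8 * B), by positivity, fun lam a => ?_⟩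
  have hfar : ∀ n, 1 / 2 ≤ ‖lam - (μ n : ℂ)‖ →
      ‖a n‖ ^ 2 ≤ 4 * ‖(lam - (μ n : ℂ)) * a n‖ ^ 2 := by
    intro n hn
    rw [norm_mul, mul_pow]
    have h1 : 1 / 4 ≤ ‖lam - (μ n : ℂ)‖ ^ 2 := by nlinarith
    nlinarith [sq_nonneg ‖a n‖]
  have hR : 0 ≤ ∑ n ∈ S, ‖(lam - (μ n : ℂ)) * a n‖ ^ 2 :=
    Finset.sum_nonneg fun _ _ => sq_nonneg _
  have hO : 0 ≤ ‖∑ n ∈ S, a n * (b n : ℂ)‖ ^ 2 := sq_nonneg _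
  by_cases h : ∃ m ∈ S, ‖lam - (μ m : ℂ)‖ < 1 / 2
  · obtain ⟨m, hm, hlt⟩ := h
    have hrest : ∑ n ∈ S.erase m, ‖a n‖ ^ 2 ≤ 4 * ∑ n ∈ S, ‖(lam - (μ n : ℂ)) * a n‖ ^ 2 := by
      calc ∑ n ∈ S.erase m, ‖a n‖ ^ 2
          ≤ ∑ n ∈ S.erase m, 4 * ‖(lam - (μ n : ℂ)) * a n‖ ^ 2 := by
            refine Finset.sum_le_sum fun n hn => hfar n ?_
            obtain ⟨hne, hnS⟩ := Finset.mem_erase.1 hn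
            have h1 := hμ m hm n hnS hne
            have h2 : |μ n - μ m| = ‖(lam - (μ m : ℂ)) - (lam - (μ n : ℂ))‖ := by
              rw [← Real.norm_eq_abs, ← Complex.norm_real]
              congr 1
              push_cast
              ring
            have h3 := norm_sub_le (lam - (μ m : ℂ)) (lam - (μ n : ℂ))
            linarith
        _ ≤ ∑ n ∈ S, 4 * ‖(lam - (μ n : ℂ)) * a n‖ ^ 2 :=
            Finset.sum_le_sum_of_subset_of_nonneg (Finset.erase_subset _ _)
              fun _ _ _ => by positivity
        _ = _ := by rw [Finset.mul_sum]
    have hsplit := Finset.add_sum_erase S (fun n => ‖a n‖ ^ 2) hm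
    have hsplit2 := Finset.add_sum_erase S (fun n => a n * (b n : ℂ)) hm
    have hcs : ‖∑ n ∈ S.erase m, a n * (b n : ℂ)‖ ^ 2 ≤ (∑ n ∈ S.erase m, ‖a n‖ ^ 2) * B := by
      have h1 : ‖∑ n ∈ S.erase m, a n * (b n : ℂ)‖ ≤ ∑ n ∈ S.erase m, ‖a n‖ * |b n| := by
        refine (norm_sum_le _ _).trans (le_of_eq ?_)
        simp
      have h2 := Finset.sum_mul_sq_le_sq_mul_sq (S.erase m) (fun n => ‖a n‖) (fun n => |b n|)
      have h3 : ∑ n ∈ S.erase m, |b n| ^ 2 ≤ B := by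
        simp only [sq_abs]
        exact Finset.sum_le_sum_of_subset_of_nonneg (Finset.erase_subset _ _)
              fun _ _ _ => sq_nonneg _
      calc _ ≤ (∑ n ∈ S.erase m, ‖a n‖ * |b n|) ^ 2 := by gcongr
        _ ≤ _ := h2
        _ ≤ _ := by gcongr
    have ham : ‖a m‖ ^ 2 * (b m) ^ 2 ≤ 2 * ‖∑ n ∈ S, a n * (b n : ℂ)‖ ^ 2
        + 2 * ‖∑ n ∈ S.erase m, a n * (b n : ℂ)‖ ^ 2 := by
      have h1 : ‖a m * (b m : ℂ)‖ ≤ ‖∑ n ∈ S, a n * (b n : ℂ)‖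
          + ‖∑ n ∈ S.erase m, a n * (b n : ℂ)‖ := by
        have := norm_sub_le (∑ n ∈ S, a n * (b n : ℂ)) (∑ n ∈ S.erase m, a n * (b n : ℂ))
        rwa [← hsplit2, add_sub_cancel_right, hsplit2] at this
      have h2 : ‖a m‖ ^ 2 * (b m) ^ 2 = ‖a m * (b m : ℂ)‖ ^ 2 := by
        rw [norm_mul, mul_pow, Complex.norm_real, Real.norm_eq_abs, sq_abs]
      rw [h2]
      have h3 := norm_nonneg (a m * (b m : ℂ))
      nlinarith [sq_nonneg (‖∑ n ∈ S, a n * (b n : ℂ)‖ - ‖∑ n ∈ S.erase m, a n * (b n : ℂ)‖)]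
    have hbm : 0 < (b m) ^ 2 := by have := hb m hm; positivity
    set R := ∑ n ∈ S, ‖(lam - (μ n : ℂ)) * a n‖ ^ 2
    set O := ‖∑ n ∈ S, a n * (b n : ℂ)‖ ^ 2
    have h5 : ‖a m‖ ^ 2 * (b m) ^ 2 ≤ 2 * O + 8 * B * R := by
      have := mul_le_mul_of_nonneg_right hrest hB
      linarith
    have h6 : ‖a m‖ ^ 2 ≤ K * (2 * O + 8 * B * R) := by
      calc ‖a m‖ ^ 2 = ((b m) ^ 2)⁻¹ * (‖a m‖ ^ 2 * (b m) ^ 2) := by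
            rw [mul_comm, mul_assoc, mul_inv_cancel₀ hbm.ne', mul_one]
        _ ≤ K * (2 * O + 8 * B * R) := by
          have := hKm m hm
          gcongr
    have h7 : 0 ≤ K * B * O := by positivity
    have h8 : 0 ≤ K * R := by positivity
    rw [← hsplit]
    nlinarith
  · push Not at h
    have h1 : ∑ n ∈ S, ‖a n‖ ^ 2 ≤ 4 * ∑ n ∈ S, ‖(lam - (μ n : ℂ)) * a n‖ ^ 2 := by
      rw [Finset.mul_sum]
      exact Finset.sum_le_sum fun n hn => hfar n (h n hn)
    have h2 : 0 ≤ K * (2 + 8 * B) := by positivity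
    nlinarith [mul_nonneg h2 hR, mul_nonneg h2 hO]

/-- Quantitative Hautus inequality, uniform over the half-plane `Re λ > -β`, for the
finite-dimensional projected pair arising from the point-controlled heat equation
`y_t = y_xx + c y + δ(· - x₀) u`: the eigenvalues are `λ_n = c - n²π²` and the point
observation of the first `n* = ⌊√c/π⌋` modes is `Σ aₙ √2 sin(nπx₀)`. -/
theorem pointwise_control_finite_hautus
    (c : ℝ) (hc : π ^ 2 < c) (x₀ : ℝ) (hx₀ : x₀ ∈ Set.Ioo (0 : ℝ) 1)
    (hsin : ∀ n : ℕ, 1 ≤ n → n ≤ ⌊Real.sqrt c / π⌋₊ → Real.sin (n * π * x₀) ≠ 0) :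
    ∀ β : ℝ, 0 < β → ∃ C : ℝ, 0 < C ∧
      ∀ lam : ℂ, -β < lam.re → ∀ a : ℕ → ℂ,
        ∑ n ∈ Finset.Icc 1 ⌊Real.sqrt c / π⌋₊, ‖a n‖ ^ 2
          ≤ C * ((∑ n ∈ Finset.Icc 1 ⌊Real.sqrt c / π⌋₊,
              ‖(lam - ((c - n ^ 2 * π ^ 2 : ℝ) : ℂ)) * a n‖ ^ 2)
            + ‖∑ n ∈ Finset.Icc 1 ⌊Real.sqrt c / π⌋₊,
                a n * ((Real.sqrt 2 * Real.sin (n * π * x₀) : ℝ) : ℂ)‖ ^ 2) := by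
  intro β _
  have key := hautus_aux (Finset.Icc 1 ⌊Real.sqrt c / π⌋₊)
    (fun n => c - n ^ 2 * π ^ 2) (fun n => Real.sqrt 2 * Real.sin (n * π * x₀))
  obtain ⟨C, hC, h⟩ := key (by
    intro m _ n _ hne
    have h1 : (c - (n : ℝ) ^ 2 * π ^ 2) - (c - (m : ℝ) ^ 2 * π ^ 2)
        = (((m : ℤ) ^ 2 - (n : ℤ) ^ 2 : ℤ) : ℝ) * π ^ 2 := by
      push_cast
      ring
    have h2 : ((m : ℤ) ^ 2 - (n : ℤ) ^ 2 : ℤ) ≠ 0 := by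
      intro h0
      apply hne
      have h3 : m ^ 2 = n ^ 2 := by exact_mod_cast sub_eq_zero.1 h0
      exact (Nat.pow_left_injective (n := 2) (by norm_num) h3).symm
    have h3 : (1 : ℝ) ≤ |(((m : ℤ) ^ 2 - (n : ℤ) ^ 2 : ℤ) : ℝ)| := by
      exact_mod_cast Int.one_le_abs h2
    show 1 ≤ |(c - (n : ℝ) ^ 2 * π ^ 2) - (c - (m : ℝ) ^ 2 * π ^ 2)|
    rw [h1, abs_mul, abs_of_nonneg (sq_nonneg π)]
    nlinarith [Real.pi_gt_three]) (by
    intro n hn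
    obtain ⟨h1, h2⟩ := Finset.mem_Icc.1 hn
    exact mul_ne_zero (by positivity) (hsin n h1 h2))
  exact ⟨C, hC, fun lam _ a => h lam a⟩
end

section
/- Let c > π², n* := ⌊√c/π⌋, for each positive integer n set λ_n := c − n²π², let x₀ ∈ (0,1) satisfy sin(nπx₀) ≠ 0 for every integer n with 1 ≤ n ≤ n*, and set β := ((n*+1)²π² − c)/2 (which is positive). Then there exists C > 0 such that for every λ ∈ ℂ with Re λ > −β and every sequence (a_n)_{n≥1} of complex numbers with Σ_{n≥1} n⁴·|a_n|² < ∞, one has Σ_{n≥1} |a_n|² ≤ C·( Σ_{n≥1} |(λ − λ_n)·a_n|² + |Σ_{n≥1} a_n·√2·sin(nπx₀)|² ). -/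
open Real

lemma hesi_abs (κ σ : ℝ) (hκ : 0 < κ) (hσ : 0 < σ) (b μ : ℕ → ℂ) (s : ℕ → ℝ) (n₀ : ℕ)
    (hs : ∀ n, |s n| ≤ √2) (hs0 : σ ≤ |s n₀|)
    (hμ : ∀ n, n ≠ n₀ → κ * ((n : ℝ) + 1) ^ 2 ≤ ‖μ n‖)
    (hF : Summable (fun n => ‖μ n * b n‖ ^ 2)) :
    ∑' n, ‖b n‖ ^ 2 ≤ (1 / κ ^ 2 + (2 + 4 * (∑' n : ℕ, (1 / ((n : ℝ) + 1) ^ 2) ^ 2) / κ ^ 2) / σ ^ 2)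
      * (∑' n, ‖μ n * b n‖ ^ 2 + ‖∑' n, b n * (s n : ℂ)‖ ^ 2) := by
  set w : ℕ → ℝ := fun n => 1 / ((n : ℝ) + 1) ^ 2 with hw
  set g : ℕ → ℝ := fun n => ‖μ n * b n‖ with hg
  have hw0 : ∀ n, 0 ≤ w n := fun n => by simp only [hw]; positivity
  have hw1 : ∀ n, w n ≤ 1 := fun n => by
    simp only [hw]
    rw [div_le_one (by positivity)]
    nlinarith [(Nat.cast_nonneg n : (0:ℝ) ≤ n)]
  have hg0 : ∀ n, 0 ≤ g n := fun n => norm_nonneg _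
  have hWs : Summable (fun n => w n ^ 2) := by
    have h := (summable_nat_add_iff 1).2 (Real.summable_one_div_nat_pow (p := 4) |>.2 (by norm_num))
    refine h.congr fun n => ?_
    simp only [hw]; push_cast
    rw [div_pow, one_pow, ← pow_mul]
  have hpq : (2:ℝ).HolderConjugate 2 := Real.HolderConjugate.two_two
  have hol := Real.inner_le_Lp_mul_Lq_tsum_of_nonneg hpq hw0 hg0
    (by simpa using hWs) (by simpa only [Real.rpow_two] using hF)
  have hT := hol
  have hTs : Summable (fun n => w n * g n) :=
    Real.summable_mul_of_Lp_Lq_of_nonneg hpq hw0 hg0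
    (by simpa using hWs) (by simpa only [Real.rpow_two] using hF)
  set T := ∑' n, w n * g n with hTdef
  set Z := ∑' n, w n ^ 2 with hZ
  set F := ∑' n, g n ^ 2 with hFd
  have hT0 : 0 ≤ T := tsum_nonneg fun n => mul_nonneg (hw0 n) (hg0 n)
  have hZ0 : 0 ≤ Z := tsum_nonneg fun n => sq_nonneg _
  have hF0 : 0 ≤ F := tsum_nonneg fun n => sq_nonneg _
  have hT2 : T ^ 2 ≤ Z * F := by
    have : T ≤ √Z * √F := by
      simpa [Real.sqrt_eq_rpow, hZ, hFd] using hT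
    calc T ^ 2 ≤ (√Z * √F) ^ 2 := by gcongr
      _ = Z * F := by rw [mul_pow, Real.sq_sqrt hZ0, Real.sq_sqrt hF0]
  set b' : ℕ → ℂ := fun n => if n = n₀ then 0 else b n with hb'
  have hb1 : ∀ n, ‖b' n‖ ≤ w n * g n / κ := by
    intro n
    by_cases h : n = n₀
    · simp only [hb', h, if_true, norm_zero]
      exact div_nonneg (mul_nonneg (hw0 _) (hg0 _)) hκ.le
    · simp only [hb', h, if_false]
      rw [le_div_iff₀ hκ]
      simp only [hw, hg]
      rw [one_div, inv_mul_eq_div, le_div_iff₀ (by positivity), norm_mul]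
      nlinarith [mul_le_mul_of_nonneg_right (hμ n h) (norm_nonneg (b n))]
  have hb2 : ∀ n, ‖b' n‖ ^ 2 ≤ g n ^ 2 / κ ^ 2 := by
    intro n
    rw [← div_pow]
    refine pow_le_pow_left₀ (norm_nonneg _) ((hb1 n).trans ?_) 2
    gcongr
    exact mul_le_of_le_one_left (hg0 n) (hw1 n)
  have hb2s : Summable (fun n => ‖b' n‖ ^ 2) :=
    Summable.of_nonneg_of_le (fun n => sq_nonneg _) hb2 (hF.div_const _)
  have hB2 : ∑' n, ‖b' n‖ ^ 2 ≤ F / κ ^ 2 := by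
    rw [hFd, ← tsum_div_const]
    exact hb2s.tsum_le_tsum hb2 (hF.div_const _)
  have hbs : ∀ n, ‖b' n * (s n : ℂ)‖ ≤ √2 / κ * (w n * g n) := by
    intro n
    rw [norm_mul, Complex.norm_real, Real.norm_eq_abs]
    calc ‖b' n‖ * |s n| ≤ (w n * g n / κ) * √2 :=
          mul_le_mul (hb1 n) (hs n) (abs_nonneg _) ((norm_nonneg _).trans (hb1 n))
      _ = _ := by ring
  have hbss : Summable (fun n => ‖b' n * (s n : ℂ)‖) :=
    Summable.of_nonneg_of_le (fun n => norm_nonneg _) hbs (hTs.mul_left _)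
  have hR : ‖∑' n, b' n * (s n : ℂ)‖ ≤ √2 / κ * T := by
    refine (norm_tsum_le_tsum_norm hbss).trans ?_
    rw [hTdef, ← tsum_mul_left]
    exact hbss.tsum_le_tsum hbs (hTs.mul_left _)
  have e1 : ∑' n, ‖b n‖ ^ 2 = ‖b n₀‖ ^ 2 + ∑' n, ‖b' n‖ ^ 2 := by
    have hd : (fun n => ‖b n‖ ^ 2) = fun n => (if n = n₀ then ‖b n₀‖ ^ 2 else 0) + ‖b' n‖ ^ 2 := by
      funext n
      by_cases h : n = n₀ <;> simp [hb', h]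
    rw [hd, Summable.tsum_add (hasSum_ite_eq n₀ _).summable hb2s, tsum_ite_eq]
  have e2 : ∑' n, b n * (s n : ℂ) = b n₀ * (s n₀ : ℂ) + ∑' n, b' n * (s n : ℂ) := by
    have hd : (fun n => b n * (s n : ℂ))
        = fun n => (if n = n₀ then b n₀ * (s n₀ : ℂ) else 0) + b' n * (s n : ℂ) := by
      funext n
      by_cases h : n = n₀ <;> simp [hb', h]
    rw [hd, Summable.tsum_add (hasSum_ite_eq n₀ _).summable hbss.of_norm, tsum_ite_eq]
  set S := ∑' n, b n * (s n : ℂ) with hS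
  have h3 : ‖b n₀‖ * σ ≤ ‖S‖ + √2 / κ * T := by
    calc ‖b n₀‖ * σ ≤ ‖b n₀‖ * |s n₀| := by gcongr
      _ = ‖b n₀ * (s n₀ : ℂ)‖ := by rw [norm_mul, Complex.norm_real, Real.norm_eq_abs]
      _ = ‖S - ∑' n, b' n * (s n : ℂ)‖ := by rw [e2]; simp
      _ ≤ ‖S‖ + ‖∑' n, b' n * (s n : ℂ)‖ := norm_sub_le _ _
      _ ≤ _ := by gcongr
  have h4 : ‖b n₀‖ ^ 2 ≤ (2 * ‖S‖ ^ 2 + 4 * Z / κ ^ 2 * F) / σ ^ 2 := by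
    rw [le_div_iff₀ (by positivity), ← mul_pow]
    calc (‖b n₀‖ * σ) ^ 2 ≤ (‖S‖ + √2 / κ * T) ^ 2 := by gcongr
      _ ≤ 2 * ‖S‖ ^ 2 + 2 * (√2 / κ * T) ^ 2 := by nlinarith [sq_nonneg (‖S‖ - √2 / κ * T)]
      _ = 2 * ‖S‖ ^ 2 + 4 / κ ^ 2 * T ^ 2 := by
        rw [mul_pow, div_pow, Real.sq_sqrt (by norm_num)]; ring
      _ ≤ 2 * ‖S‖ ^ 2 + 4 / κ ^ 2 * (Z * F) := by gcongr
      _ = _ := by ring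
  rw [e1]
  have hS0 : 0 ≤ ‖S‖ ^ 2 := sq_nonneg _
  have p1 : 0 ≤ 1 / κ ^ 2 * ‖S‖ ^ 2 := by positivity
  have p2 : 0 ≤ 2 * F / σ ^ 2 := by positivity
  have p3 : 0 ≤ 4 * Z / κ ^ 2 * ‖S‖ ^ 2 / σ ^ 2 := by positivity
  calc _ ≤ (2 * ‖S‖ ^ 2 + 4 * Z / κ ^ 2 * F) / σ ^ 2 + F / κ ^ 2 := add_le_add h4 hB2
    _ ≤ (2 * ‖S‖ ^ 2 + 4 * Z / κ ^ 2 * F) / σ ^ 2 + F / κ ^ 2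
        + (1 / κ ^ 2 * ‖S‖ ^ 2 + 2 * F / σ ^ 2 + 4 * Z / κ ^ 2 * ‖S‖ ^ 2 / σ ^ 2) := by linarith
    _ = _ := by ring

/-- gap between different eigenvalues -/
lemma hesi_gap (c : ℝ) (lam : ℂ) (m n : ℕ) (hmn : m ≠ n)
    (hm : ‖lam - ((c - ((m + 1 : ℕ) : ℝ) ^ 2 * π ^ 2 : ℝ) : ℂ)‖ < π ^ 2 / 2) :
    π ^ 2 / 2 ≤ ‖lam - ((c - ((n + 1 : ℕ) : ℝ) ^ 2 * π ^ 2 : ℝ) : ℂ)‖ := by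
  by_contra! hn
  have h := norm_sub_le (lam - ((c - ((m + 1 : ℕ) : ℝ) ^ 2 * π ^ 2 : ℝ) : ℂ))
    (lam - ((c - ((n + 1 : ℕ) : ℝ) ^ 2 * π ^ 2 : ℝ) : ℂ))
  rw [sub_sub_sub_cancel_left, ← Complex.ofReal_sub, Complex.norm_real, Real.norm_eq_abs] at h
  have h2 : |(c - ((n + 1 : ℕ) : ℝ) ^ 2 * π ^ 2) - (c - ((m + 1 : ℕ) : ℝ) ^ 2 * π ^ 2)|
      = |(((m + 1 : ℕ) : ℤ) ^ 2 - ((n + 1 : ℕ) : ℤ) ^ 2 : ℤ)| * π ^ 2 := by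
    rw [← abs_of_nonneg (sq_nonneg π), Int.cast_abs, ← abs_mul, abs_of_nonneg (sq_nonneg π)]
    push_cast
    congr 1; ring
  have h3 : (1 : ℤ) ≤ |(((m + 1 : ℕ) : ℤ) ^ 2 - ((n + 1 : ℕ) : ℤ) ^ 2 : ℤ)| := by
    apply Int.one_le_abs
    intro h0
    have : ((m + 1 : ℕ)) ^ 2 = (n + 1) ^ 2 := by exact_mod_cast sub_eq_zero.1 h0
    have := Nat.pow_left_injective (n := 2) (by norm_num) this
    omega
  have h4 : (1 : ℝ) ≤ (|(((m + 1 : ℕ) : ℤ) ^ 2 - ((n + 1 : ℕ) : ℤ) ^ 2 : ℤ)| : ℤ) := by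
    exact_mod_cast h3
  rw [h2] at h
  nlinarith [sq_nonneg π, Real.pi_pos]

/-- The condition (HESI)_β, in sine-series form, for the one-dimensional heat equation with
point-wise control `y_t = y_xx + c y + δ(· - x₀) u`, with
`β = ((n*+1)²π² - c)/2 > 0` where `n* = ⌊√c/π⌋`: sequences `(a_n)_{n ≥ 1}` are encoded as
`a : ℕ → ℂ` evaluated at `n + 1`. -/
theorem pointwise_control_HESI
    (c : ℝ) (hc : π ^ 2 < c) (x₀ : ℝ) (hx₀ : x₀ ∈ Set.Ioo (0 : ℝ) 1)
    (hsin : ∀ n : ℕ, 1 ≤ n → n ≤ ⌊Real.sqrt c / π⌋₊ → Real.sin (n * π * x₀) ≠ 0) :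
    ∃ C : ℝ, 0 < C ∧
      ∀ lam : ℂ, -(((⌊Real.sqrt c / π⌋₊ + 1 : ℕ) ^ 2 * π ^ 2 - c) / 2) < lam.re →
        ∀ a : ℕ → ℂ,
          Summable (fun n : ℕ => ((n + 1 : ℕ) : ℝ) ^ 4 * ‖a (n + 1)‖ ^ 2) →
          ∑' n : ℕ, ‖a (n + 1)‖ ^ 2
            ≤ C * ((∑' n : ℕ,
                ‖(lam - ((c - ((n + 1 : ℕ) : ℝ) ^ 2 * π ^ 2 : ℝ) : ℂ)) * a (n + 1)‖ ^ 2)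
              + ‖∑' n : ℕ, a (n + 1) *
                  ((Real.sqrt 2 * Real.sin (((n + 1 : ℕ) : ℝ) * π * x₀) : ℝ) : ℂ)‖ ^ 2) := by
  set N : ℕ := ⌊Real.sqrt c / π⌋₊ with hN
  have hpi := Real.pi_pos
  have hc0 : 0 < c := lt_trans (by positivity) hc
  have hN1 : 1 ≤ N := by
    rw [hN, Nat.one_le_floor_iff, le_div_iff₀ hpi, one_mul]
    exact Real.le_sqrt_of_sq_le hc.le
  have hβ : c < ((N + 1 : ℕ) : ℝ) ^ 2 * π ^ 2 := by
    have h := Nat.lt_floor_add_one (Real.sqrt c / π)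
    rw [← hN, div_lt_iff₀ hpi, Real.sqrt_lt' (by positivity), mul_pow] at h
    exact_mod_cast h
  set M : ℝ := ((N + 1 : ℕ) : ℝ) ^ 2 * π ^ 2 with hM
  have hM0 : 0 < M := hc0.trans hβ
  have hNpos : (0:ℝ) < N := by exact_mod_cast hN1
  obtain ⟨σ, hσ, hσs⟩ : ∃ σ : ℝ, 0 < σ ∧ ∀ n : ℕ, n < N →
      σ ≤ |Real.sqrt 2 * Real.sin (((n + 1 : ℕ) : ℝ) * π * x₀)| := by
    obtain ⟨m, hm, hmin⟩ := Finset.exists_min_image (Finset.range N)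
      (fun n : ℕ => |Real.sqrt 2 * Real.sin (((n + 1 : ℕ) : ℝ) * π * x₀)|)
      ⟨0, Finset.mem_range.2 hN1⟩
    refine ⟨_, ?_, fun n hn => hmin n (Finset.mem_range.2 hn)⟩
    have := hsin (m + 1) (by omega) (by have := Finset.mem_range.1 hm; omega)
    have h2 : Real.sqrt 2 ≠ 0 := by positivity
    exact abs_pos.2 (mul_ne_zero h2 this)
  set κ₁ : ℝ := π ^ 2 * ((M - c) / 2) / M with hκ₁
  set κ₂ : ℝ := π ^ 2 / 2 / (N : ℝ) ^ 2 with hκ₂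
  have hκ₁p : 0 < κ₁ := by
    have : 0 < M - c := sub_pos.2 hβ
    positivity
  have hκ₂p : 0 < κ₂ := by positivity
  have hκ : 0 < min κ₁ κ₂ := lt_min hκ₁p hκ₂p
  have hZ0 : 0 ≤ ∑' n : ℕ, (1 / ((n : ℝ) + 1) ^ 2) ^ 2 := tsum_nonneg fun n => sq_nonneg _
  refine ⟨1 / (min κ₁ κ₂) ^ 2 +
    (2 + 4 * (∑' n : ℕ, (1 / ((n : ℝ) + 1) ^ 2) ^ 2) / (min κ₁ κ₂) ^ 2) / σ ^ 2, by positivity, ?_⟩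
  intro lam hlam a ha
  obtain ⟨n₀, hn₀, hgap⟩ : ∃ n₀ : ℕ, n₀ < N ∧ ∀ n : ℕ, n < N → n ≠ n₀ →
      π ^ 2 / 2 ≤ ‖lam - ((c - ((n + 1 : ℕ) : ℝ) ^ 2 * π ^ 2 : ℝ) : ℂ)‖ := by
    by_cases h : ∃ m : ℕ, m < N ∧ ‖lam - ((c - ((m + 1 : ℕ) : ℝ) ^ 2 * π ^ 2 : ℝ) : ℂ)‖ < π ^ 2 / 2
    · obtain ⟨m, hm, hm2⟩ := h
      exact ⟨m, hm, fun n _ hne => hesi_gap c lam m n hne.symm hm2⟩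
    · push Not at h
      exact ⟨0, hN1, fun n hn _ => h n hn⟩
  refine hesi_abs (min κ₁ κ₂) σ hκ hσ (fun n => a (n + 1))
    (fun n => lam - ((c - ((n + 1 : ℕ) : ℝ) ^ 2 * π ^ 2 : ℝ) : ℂ))
    (fun n => Real.sqrt 2 * Real.sin (((n + 1 : ℕ) : ℝ) * π * x₀)) n₀ ?_ (hσs n₀ hn₀) ?_ ?_
  · intro n
    rw [abs_mul, abs_of_nonneg (Real.sqrt_nonneg 2)]
    exact mul_le_of_le_one_right (Real.sqrt_nonneg 2) (Real.abs_sin_le_one _)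
  · intro n hne
    by_cases hn : n < N
    · refine le_trans ?_ (hgap n hn hne)
      have h1 : (n : ℝ) + 1 ≤ N := by exact_mod_cast hn
      calc min κ₁ κ₂ * ((n : ℝ) + 1) ^ 2 ≤ κ₂ * (N : ℝ) ^ 2 := by
            gcongr
            exact min_le_right _ _
        _ = π ^ 2 / 2 := by rw [hκ₂]; field_simp
    · push Not at hn
      have h1 : ((N + 1 : ℕ) : ℝ) ≤ (n : ℝ) + 1 := by
        push_cast
        have : (N : ℝ) ≤ n := by exact_mod_cast hn
        linarith
      have hMn : M ≤ ((n : ℝ) + 1) ^ 2 * π ^ 2 := by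
        rw [hM]; gcongr
      refine le_trans ?_ (Complex.re_le_norm _)
      rw [Complex.sub_re, Complex.ofReal_re]
      push_cast
      set X := ((n : ℝ) + 1) ^ 2 with hX
      have hX0 : 0 ≤ X := sq_nonneg _
      have h5 : min κ₁ κ₂ * X ≤ κ₁ * X := by gcongr; exact min_le_left _ _
      have h6 : κ₁ * X ≤ X * π ^ 2 - (M + c) / 2 := by
        rw [hκ₁, div_mul_eq_mul_div, div_le_iff₀ hM0]
        nlinarith [mul_le_mul_of_nonneg_right hMn (by positivity : 0 ≤ (M + c) / 2)]
      linarith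
  · refine Summable.of_nonneg_of_le (fun n => sq_nonneg _) (fun n => ?_)
      (ha.mul_left ((‖lam‖ + c + π ^ 2) ^ 2))
    rw [norm_mul, mul_pow]
    have hn1 : (1 : ℝ) ≤ ((n + 1 : ℕ) : ℝ) ^ 2 := by
      push_cast
      nlinarith [(Nat.cast_nonneg n : (0:ℝ) ≤ n)]
    have hb : ‖lam - ((c - ((n + 1 : ℕ) : ℝ) ^ 2 * π ^ 2 : ℝ) : ℂ)‖
        ≤ (‖lam‖ + c + π ^ 2) * ((n + 1 : ℕ) : ℝ) ^ 2 := by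
      refine (norm_sub_le _ _).trans ?_
      rw [Complex.norm_real, Real.norm_eq_abs]
      have h7 : |c - ((n + 1 : ℕ) : ℝ) ^ 2 * π ^ 2| ≤ c + ((n + 1 : ℕ) : ℝ) ^ 2 * π ^ 2 := by
        have : 0 ≤ ((n + 1 : ℕ) : ℝ) ^ 2 * π ^ 2 := by positivity
        rw [abs_le]; constructor <;> linarith
      nlinarith [mul_le_mul_of_nonneg_left hn1 (norm_nonneg lam),
        mul_le_mul_of_nonneg_left hn1 hc0.le]
    calc _ ≤ ((‖lam‖ + c + π ^ 2) * ((n + 1 : ℕ) : ℝ) ^ 2) ^ 2 * ‖a (n + 1)‖ ^ 2 := by gcongr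
      _ = _ := by ring
end

section
/- Let c > π² and n* := ⌊√c/π⌋, and for each positive integer n set λ_n := c − n²π². Suppose x₀ = k/n ∈ (0,1) for some positive integers k and n with n ≤ n*. Then for every β > 0 there is no constant C > 0 such that for all λ ∈ ℂ with Re λ > −β and all sequences (a_m)_{m≥1} of complex numbers with Σ_{m≥1} m⁴·|a_m|² < ∞ one has Σ_{m≥1} |a_m|² ≤ C·( Σ_{m≥1} |(λ − λ_m)·a_m|² + |Σ_{m≥1} a_m·√2·sin(mπx₀)|² ). (Indeed, the choice λ = λ_n ≥ 0 and a_m = 1 if m = n, a_m = 0 otherwise, makes the left-hand side equal to 1 and the right-hand side equal to 0.) -/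
open Real

/-- Failure of the Hautus-type inequality (HESI)_β, for every `β > 0`, when the control
point `x₀ = k/n` is rational with `n ≤ n* = ⌊√c/π⌋`: this is why the heat equation with
point-wise control at such `x₀` is not exponentially stabilizable. Sequences
`(a_m)_{m ≥ 1}` are encoded as `a : ℕ → ℂ` evaluated at `m + 1`. -/
theorem pointwise_control_HESI_fails_of_rational
    (c : ℝ) (hc : π ^ 2 < c) (k n : ℕ) (hk : 0 < k) (hn : 0 < n)
    (hnle : n ≤ ⌊Real.sqrt c / π⌋₊)
    (x₀ : ℝ) (hx₀def : x₀ = (k : ℝ) / n) (hx₀ : x₀ ∈ Set.Ioo (0 : ℝ) 1) :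
    ∀ β : ℝ, 0 < β →
      ¬ ∃ C : ℝ, 0 < C ∧
        ∀ lam : ℂ, -β < lam.re → ∀ a : ℕ → ℂ,
          Summable (fun m : ℕ => ((m + 1 : ℕ) : ℝ) ^ 4 * ‖a (m + 1)‖ ^ 2) →
          ∑' m : ℕ, ‖a (m + 1)‖ ^ 2
            ≤ C * ((∑' m : ℕ,
                ‖(lam - ((c - ((m + 1 : ℕ) : ℝ) ^ 2 * π ^ 2 : ℝ) : ℂ)) * a (m + 1)‖ ^ 2)
              + ‖∑' m : ℕ, a (m + 1) *
                  ((Real.sqrt 2 * Real.sin (((m + 1 : ℕ) : ℝ) * π * x₀) : ℝ) : ℂ)‖ ^ 2) := by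
  rintro β hβ ⟨C, hC, H⟩
  obtain ⟨p, rfl⟩ : ∃ p, n = p + 1 := ⟨n - 1, by omega⟩
  have hpi := Real.pi_pos
  have hc0 : 0 ≤ c := le_trans (sq_nonneg π) hc.le
  have h1 : ((p + 1 : ℕ) : ℝ) ≤ Real.sqrt c / π :=
    (Nat.le_floor_iff (div_nonneg (Real.sqrt_nonneg c) hpi.le)).1 hnle
  have h2 : ((p + 1 : ℕ) : ℝ) * π ≤ Real.sqrt c := (le_div_iff₀ hpi).1 h1
  have h3 : ((p + 1 : ℕ) : ℝ) ^ 2 * π ^ 2 ≤ c := by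
    have h4 : (((p + 1 : ℕ) : ℝ) * π) ^ 2 ≤ Real.sqrt c ^ 2 :=
      pow_le_pow_left₀ (by positivity) h2 2
    rw [Real.sq_sqrt hc0, mul_pow] at h4
    exact h4
  have hsin : Real.sin (((p + 1 : ℕ) : ℝ) * π * x₀) = 0 := by
    have hne : ((p + 1 : ℕ) : ℝ) ≠ 0 := by positivity
    have h5 : ((p + 1 : ℕ) : ℝ) * π * x₀ = (k : ℝ) * π := by
      rw [hx₀def]; field_simp
    rw [h5]; exact Real.sin_nat_mul_pi k
  have key := H ((c - ((p + 1 : ℕ) : ℝ) ^ 2 * π ^ 2 : ℝ) : ℂ)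
    (by rw [Complex.ofReal_re]; linarith)
    (fun m => if m = p + 1 then 1 else 0)
    (summable_of_ne_finset_zero (s := {p}) (by
      intro b hb
      have hb' : b ≠ p := by simpa using hb
      simp [hb']))
  rw [tsum_eq_single p (by intro b hb; simp [hb]),
    tsum_eq_single p (by intro b hb; simp [hb]),
    tsum_eq_single p (by intro b hb; simp [hb]), hsin] at key
  simp at key
  linarith
end
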